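/- arXiv:1801.03359 — 2 statements merged into one kernel-verified Lean document; each statement's English description precedes it below -/
import Mathlib

section
/- Assume f satisfies (A1)–(A3) and fix χ > 0. Then, for all sufficiently small ε > 0, there exist a countable directed graph 𝔊 = (V, E), with associated topological Markov shift Σ := {v ∈ V^ℤ : (v_n, v_{n+1}) ∈ E for all n ∈ ℤ}, left shift σ, distance d(v, w) := exp(−min{|n| : v_n ≠ w_n}), and recurrent set Σ^# := {v ∈ Σ : some vertex occurs infinitely often among (v_n)_{n>0} and some vertex occurs infinitely often among (v_n)_{n<0}}, and a map π : Σ → M̂ such that: (0) π is Hölder continuous, i.e. there are C > 0 and α ∈ (0,1] with d̂(π(v), π(w)) ≤ C·d(v,w)^α for all v, w ∈ Σ; (1) π ∘ σ = f̂ ∘ π; (2) for every f-adapted χ-expanding f-invariant Borel probability measure μ on M and every lift μ̂ of μ, the set π[Σ^#] has full μ̂-outer measure; (3) for every x̂ ∈ π[Σ^#], the set {v ∈ Σ^# : π(v) = x̂} is finite. -/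
open Real MeasureTheory Filter Topology Metric Set

noncomputable section

namespace OneDim

/-- The interval `M = [0, 1/2]`. -/
def Mset : Set ℝ := Set.Icc 0 (1/2)

/-- Data of a piecewise `C^{1+β}` interval map `f : M → M` with discontinuity set `D`,
constants `β ∈ (0,1)`, `a, K > 1`, radius function `r` and inverse branches `g`. -/
structure GoodMap where
  f : ℝ → ℝ
  D : Set ℝ
  β : ℝ
  a : ℝ
  K : ℝ
  r : ℝ → ℝ
  g : ℝ → ℝ → ℝ
  hβ0 : 0 < β
  hβ1 : β < 1
  ha : 1 < a
  hK : 1 < K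
  hmaps : ∀ x ∈ Mset, f x ∈ Mset
  hD : D ⊆ Mset
  hdiff : DifferentiableOn ℝ f (Mset \ D)

namespace GoodMap

/-- The critical set `C = {x ∈ M \ D : df_x = 0}`. -/
def crit (F : GoodMap) : Set ℝ := {x | x ∈ Mset \ F.D ∧ deriv F.f x = 0}

/-- The singular set `S = C ∪ D`. -/
def S (F : GoodMap) : Set ℝ := F.crit ∪ F.D

/-- Distance to the singular set. -/
def dS (F : GoodMap) (x : ℝ) : ℝ := Metric.infDist x F.S

/-- Conditions (A1)–(A3). -/
def SatA (F : GoodMap) : Prop :=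
  ∀ x ∈ Mset, x ∉ F.S → F.f x ∉ F.S →
    (min (F.dS x ^ F.a) (F.dS (F.f x) ^ F.a) < F.r x ∧ F.r x < 1) ∧
    -- (A1)
    (Set.InjOn F.f (Metric.ball x (2 * F.r x)) ∧
      (∀ y ∈ Metric.ball x (2 * F.r x), DifferentiableAt ℝ F.f y) ∧
      F.g x (F.f x) = x ∧
      (∀ z ∈ Metric.ball (F.f x) (2 * F.r x), F.f (F.g x z) = z) ∧
      Set.InjOn (F.g x) (Metric.ball (F.f x) (2 * F.r x)) ∧
      (∀ z ∈ Metric.ball (F.f x) (2 * F.r x), DifferentiableAt ℝ (F.g x) z)) ∧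
    -- (A2)
    ((∀ y ∈ Metric.ball x (2 * F.r x),
        F.dS x ^ F.a ≤ |deriv F.f y| ∧ |deriv F.f y| ≤ F.dS x ^ (-F.a)) ∧
      (∀ z ∈ Metric.ball (F.f x) (2 * F.r x),
        F.dS x ^ F.a ≤ |deriv (F.g x) z| ∧ |deriv (F.g x) z| ≤ F.dS x ^ (-F.a))) ∧
    -- (A3)
    ((∀ y ∈ Metric.ball x (2 * F.r x), ∀ z ∈ Metric.ball x (2 * F.r x),
        |deriv F.f y - deriv F.f z| ≤ F.K * |y - z| ^ F.β) ∧
      (∀ y ∈ Metric.ball (F.f x) (2 * F.r x), ∀ z ∈ Metric.ball (F.f x) (2 * F.r x),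
        |deriv (F.g x) y - deriv (F.g x) z| ≤ F.K * |y - z| ^ F.β))

end GoodMap

/-- Membership in the natural extension space `M̂`. -/
def inMhat (f : ℝ → ℝ) (x : ℤ → ℝ) : Prop :=
  (∀ n, x n ∈ Mset) ∧ ∀ n : ℤ, f (x (n - 1)) = x n

/-- The natural extension map `f̂` (left shift). -/
def fhat (x : ℤ → ℝ) : ℤ → ℝ := fun n => x (n + 1)

/-- Iterate `f̂^k` of the natural extension map, `k ∈ ℤ`. -/
def fhatI (k : ℤ) (x : ℤ → ℝ) : ℤ → ℝ := fun n => x (n + k)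

/-- The metric `d̂(x̂,ŷ) = sup{2^n d(x_n,y_n) : n ≤ 0}` on `M̂`. -/
def dhat (x y : ℤ → ℝ) : ℝ :=
  sSup {t : ℝ | ∃ n : ℤ, n ≤ 0 ∧ t = (2:ℝ) ^ n * |x n - y n|}

/-- The invertible derivative cocycle `d̂f^{(n)}` over `f̂`. -/
def dfhat (f : ℝ → ℝ) (x : ℤ → ℝ) (n : ℤ) : ℝ :=
  if 0 ≤ n then ∏ j ∈ Finset.range n.toNat, deriv f (x (j : ℤ))
  else (∏ j ∈ Finset.range (-n).toNat, deriv f (x (-(j : ℤ) - 1)))⁻¹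

/-- The Pesin parameter `u(x̂)`. -/
def uPes (f : ℝ → ℝ) (χ : ℝ) (x : ℤ → ℝ) : ℝ :=
  Real.sqrt (∑' n : ℕ, Real.exp (2 * (n:ℝ) * χ) * (dfhat f x (-(n:ℤ))) ^ 2)

/-- The Pesin chart `Ψ_{x̂}(t) = t/u(x̂) + x₀`. -/
def Psi (f : ℝ → ℝ) (χ : ℝ) (x : ℤ → ℝ) (t : ℝ) : ℝ := t / uPes f χ x + x 0

/-- The set `NUE_χ`. -/
def NUE (F : GoodMap) (χ : ℝ) : Set (ℤ → ℝ) :=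
  {x | inMhat F.f x ∧ (∀ n, x n ∉ F.S) ∧
    (∃ l > χ, Tendsto (fun n : ℕ => Real.log |dfhat F.f x (n:ℤ)| / (n:ℝ)) atTop (𝓝 l)) ∧
    (∃ l > χ, Tendsto (fun n : ℕ => Real.log |dfhat F.f x (-(n:ℤ))| / (-(n:ℝ))) atTop (𝓝 l))}

/-- `ρ(x̂) = d({x₋₁,x₀,x₁}, S)`. -/
def rho (F : GoodMap) (x : ℤ → ℝ) : ℝ :=
  min (F.dS (x (-1))) (min (F.dS (x 0)) (F.dS (x 1)))

/-- `I_ε = {e^{-εn/3} : n ≥ 0}`. -/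
def Ieps (ε : ℝ) : Set ℝ := {q | ∃ n : ℕ, q = Real.exp (-(ε * n) / 3)}

/-- `Q̃_ε(x̂)`. -/
def Qtilde (F : GoodMap) (χ ε : ℝ) (x : ℤ → ℝ) : ℝ :=
  ε ^ (3 / F.β) *
    min (uPes F.f χ x ^ (-(24 / F.β)))
      (uPes F.f χ (fhatI (-1) x) ^ (-(12 / F.β)) * rho F x ^ (72 * F.a / F.β))

/-- `Q_ε(x̂) = max{q ∈ I_ε : q ≤ Q̃_ε(x̂)}`. -/
def Qeps (F : GoodMap) (χ ε : ℝ) (x : ℤ → ℝ) : ℝ :=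
  sSup {q | q ∈ Ieps ε ∧ q ≤ Qtilde F χ ε x}

/-- The regular set. -/
def Reg (F : GoodMap) : Set (ℤ → ℝ) :=
  {x | inMhat F.f x ∧ (∀ n, x n ∉ F.S) ∧
    Tendsto (fun n : ℕ => Real.log (F.dS (x (n:ℤ))) / (n:ℝ)) atTop (𝓝 0) ∧
    Tendsto (fun n : ℕ => Real.log (F.dS (x (-(n:ℤ)))) / (n:ℝ)) atTop (𝓝 0)}

/-- The set `NUE*_χ`. -/
def NUEstar (F : GoodMap) (χ : ℝ) : Set (ℤ → ℝ) :=
  {x | x ∈ NUE F χ ∧ x ∈ Reg F ∧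
    (∃ nk : ℕ → ℤ, Tendsto nk atTop atBot ∧
      Tendsto (fun k => uPes F.f χ (fhatI (nk k) x)) atTop (𝓝 (uPes F.f χ x))) ∧
    Tendsto (fun n : ℕ => Real.log (uPes F.f χ (fhatI (-(n:ℤ)) x)) / (-(n:ℝ))) atTop (𝓝 0)}

/-- An ε-chart is a pair `(x̂, p)`, representing `Ψ_{x̂}` restricted to `[-p,p]`. -/
structure Chart where
  x : ℤ → ℝ
  p : ℝ

/-- `(x̂, p)` is a genuine ε-chart. -/
def IsChart (F : GoodMap) (χ ε : ℝ) (c : Chart) : Prop :=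
  c.x ∈ NUE F χ ∧ 0 < c.p ∧ c.p ≤ Qeps F χ ε c.x

/-- ε-overlap of two ε-charts. -/
def Overlap (F : GoodMap) (χ ε : ℝ) (c₁ c₂ : Chart) : Prop :=
  Real.exp (-ε) ≤ c₁.p / c₂.p ∧ c₁.p / c₂.p ≤ Real.exp ε ∧
  |c₁.x 0 - c₂.x 0| + |(uPes F.f χ c₁.x)⁻¹ - (uPes F.f χ c₂.x)⁻¹| < (c₁.p * c₂.p) ^ 4

/-- `g_{x̂} = g_{x₋₁}`, the inverse branch of `f` taking `x₀` to `x₋₁`. -/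
def ghat (F : GoodMap) (x : ℤ → ℝ) : ℝ → ℝ := F.g (x (-1))

/-- `G_{x̂} = Ψ_{f̂⁻¹x̂}⁻¹ ∘ g_{x̂} ∘ Ψ_{x̂}`. -/
def Gmap (F : GoodMap) (χ : ℝ) (x : ℤ → ℝ) (t : ℝ) : ℝ :=
  uPes F.f χ (fhatI (-1) x) * (ghat F x (Psi F.f χ x t) - x (-1))

/-- `G_{x̂,ŷ} = Ψ_{ŷ}⁻¹ ∘ g_{x̂} ∘ Ψ_{x̂}`. -/
def Gmap2 (F : GoodMap) (χ : ℝ) (x y : ℤ → ℝ) (t : ℝ) : ℝ :=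
  uPes F.f χ y * (ghat F x (Psi F.f χ x t) - y 0)

/-- `F_{x̂} = Ψ_{f̂x̂}⁻¹ ∘ f ∘ Ψ_{x̂}`. -/
def Fmap (F : GoodMap) (χ : ℝ) (x : ℤ → ℝ) (t : ℝ) : ℝ :=
  uPes F.f χ (fhat x) * (F.f (Psi F.f χ x t) - x 1)

/-- `δ_ε = e^{-εn}` where `n` is the unique positive integer with `e^{-εn} < ε ≤ e^{-ε(n-1)}`. -/
def deltaEps (ε : ℝ) : ℝ :=
  Real.exp (-(ε * ((⌊Real.log (1 / ε) / ε⌋ + 1 : ℤ) : ℝ)))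

/-- Weak edge `v ⤎ w` (from `w = Ψ_{x̂}^p` to `v = Ψ_{ŷ}^q`). -/
def WeakEdge (F : GoodMap) (χ ε : ℝ) (v w : Chart) : Prop :=
  IsChart F χ ε v ∧ IsChart F χ ε w ∧
  Overlap F χ ε ⟨fhatI (-1) w.x, v.p⟩ v ∧
  w.p ≤ Real.exp ε * v.p

/-- Edge `v ← w` (from `w = Ψ_{x̂}^p` to `v = Ψ_{ŷ}^q`). -/
def Edge (F : GoodMap) (χ ε : ℝ) (v w : Chart) : Prop :=
  IsChart F χ ε v ∧ IsChart F χ ε w ∧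
  Overlap F χ ε ⟨fhatI (-1) w.x, v.p⟩ v ∧
  |v.x 1 - w.x 0| < v.p ∧
  Real.exp (-v.p) ≤ uPes F.f χ (fhat v.x) / uPes F.f χ w.x ∧
  uPes F.f χ (fhat v.x) / uPes F.f χ w.x ≤ Real.exp v.p ∧
  w.p = min (Real.exp ε * v.p) (deltaEps ε * Qeps F χ ε w.x)

/-- ε-generalized pseudo-orbit. -/
def IsGPO (F : GoodMap) (χ ε : ℝ) (v : ℤ → Chart) : Prop :=
  ∀ n : ℤ, Edge F χ ε (v n) (v (n + 1))

/-- weak ε-generalized pseudo-orbit. -/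
def IsWeakGPO (F : GoodMap) (χ ε : ℝ) (v : ℤ → Chart) : Prop :=
  ∀ n : ℤ, WeakEdge F χ ε (v n) (v (n + 1))

/-- The range `Ψ_{x̂}([-p,p])` of an ε-chart. -/
def chartRange (F : GoodMap) (χ : ℝ) (c : Chart) : Set ℝ :=
  Psi F.f χ c.x '' Set.Icc (-c.p) c.p

/-- A bi-infinite sequence of ε-charts shadows `x̂ ∈ M̂`. -/
def Shadows (F : GoodMap) (χ : ℝ) (v : ℤ → Chart) (x : ℤ → ℝ) : Prop :=
  inMhat F.f x ∧ ∀ n : ℤ, x n ∈ chartRange F χ (v n)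

/-- `q_ε(x̂) = δ_ε inf{e^{ε|m|} Q_ε(f̂^m x̂) : m ≤ 0}`. -/
def qeps (F : GoodMap) (χ ε : ℝ) (x : ℤ → ℝ) : ℝ :=
  deltaEps ε *
    sInf {t : ℝ | ∃ m : ℤ, m ≤ 0 ∧ t = Real.exp (ε * |(m:ℝ)|) * Qeps F χ ε (fhatI m x)}

/-- Recurrence: some symbol repeats infinitely often in the future and some in the past. -/
def Recurrent {V : Type*} (v : ℤ → V) : Prop :=
  (∃ c, {n : ℤ | 0 < n ∧ v n = c}.Infinite) ∧ ∃ c, {n : ℤ | n < 0 ∧ v n = c}.Infinite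

/-- The distance `d(v,w) = exp(-min{|n| : v_n ≠ w_n})` on sequence spaces. -/
def dSigma {V : Type*} (v w : ℤ → V) : ℝ :=
  sSup {t : ℝ | ∃ n : ℤ, v n ≠ w n ∧ t = Real.exp (-|(n:ℝ)|)}

/-- Sup norm over a set. -/
def supNorm (h : ℝ → ℝ) (I : Set ℝ) : ℝ := sSup ((fun t => |h t|) '' I)

/-- Hölder constant over a set. -/
def holConst (γ : ℝ) (h : ℝ → ℝ) (I : Set ℝ) : ℝ :=
  sSup {r : ℝ | ∃ t ∈ I, ∃ s ∈ I, t ≠ s ∧ r = |h t - h s| / |t - s| ^ γ}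

/-! ### Symbolic part: cylinders, good times -/

/-- Shift of a bi-infinite sequence by `k`. -/
def sh {α : Type*} (k : ℤ) (a : ℤ → α) : ℤ → α := fun n => a (n + k)

/-- An interval map with a labelled domain `W`, and a contraction rate. -/
structure Sys where
  f : ℝ → ℝ
  W : Set ℝ
  c : ℝ → ℚ
  lam : ℝ
  hW : W ⊆ Mset
  lam0 : 0 < lam
  lam1 : lam < 1
  hfW : ∀ x ∈ W, f x ∈ Mset

namespace Sys

variable (Y : Sys)

/-- Cylinder: points whose itinerary is `a t, …, a (t+k-1)`. -/
def Z (a : ℤ → ℚ) (t : ℤ) (k : ℕ) : Set ℝ :=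
  {z | ∀ j : ℕ, j < k → Y.f^[j] z ∈ Y.W ∧ Y.c (Y.f^[j] z) = a (t + j)}

/-- The cylinder of length `κ` at time `t` has a full contracting pullback of order `m`. -/
def PP (a : ℤ → ℚ) (t : ℤ) (m κ : ℕ) : Prop :=
  (∀ q ∈ closure (Y.Z a t κ), ∃ y ∈ Y.Z a (t - m) m, Y.f^[m] y = q) ∧
  ∀ y ∈ Y.Z a (t - m) m, ∀ z ∈ Y.Z a (t - m) m,
    Y.f^[m] y ∈ closure (Y.Z a t κ) → Y.f^[m] z ∈ closure (Y.Z a t κ) →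
    |y - z| ≤ Y.lam ^ m * |Y.f^[m] y - Y.f^[m] z|

/-- `t` is a good time of level `κ`. -/
def Good (a : ℤ → ℚ) (t : ℤ) (κ : ℕ) : Prop := ∀ m : ℕ, Y.PP a t m κ

variable {Y}

lemma Z_congr {a b : ℤ → ℚ} {t s : ℤ} {k : ℕ} (h : ∀ j : ℕ, j < k → a (t + j) = b (s + j)) :
    Y.Z a t k = Y.Z b s k := by
  ext z
  constructor
  · intro hz j hj
    exact ⟨(hz j hj).1, by rw [(hz j hj).2, h j hj]⟩
  · intro hz j hj
    exact ⟨(hz j hj).1, by rw [(hz j hj).2, h j hj]⟩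

lemma Z_anti {a : ℤ → ℚ} {t : ℤ} {k l : ℕ} (h : k ≤ l) : Y.Z a t l ⊆ Y.Z a t k :=
  fun _ hz j hj => hz j (lt_of_lt_of_le hj h)

lemma Z_append {a : ℤ → ℚ} {t s : ℤ} {k l : ℕ} (hs : s = t + k) {z : ℝ}
    (h1 : z ∈ Y.Z a t k) (h2 : Y.f^[k] z ∈ Y.Z a s l) : z ∈ Y.Z a t (k + l) := by
  intro j hj
  by_cases hjk : j < k
  · exact h1 j hjk
  · obtain ⟨i, rfl⟩ := Nat.exists_eq_add_of_le (not_lt.1 hjk)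
    have := h2 i (by omega)
    rw [← Function.iterate_add_apply] at this
    rw [add_comm k i]
    refine ⟨this.1, ?_⟩
    rw [this.2, hs]
    congr 1
    push_cast
    ring

lemma Z_tail {a : ℤ → ℚ} {t s : ℤ} {k l : ℕ} (hs : s = t + k) {z : ℝ}
    (h1 : z ∈ Y.Z a t (k + l)) : Y.f^[k] z ∈ Y.Z a s l := by
  intro j hj
  have := h1 (j + k) (by omega)
  rw [Function.iterate_add_apply] at this
  refine ⟨this.1, ?_⟩
  rw [this.2, hs]
  congr 1
  push_cast
  ring

lemma PP_congr {a b : ℤ → ℚ} {t s : ℤ} {m κ : ℕ}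
    (h : ∀ j : ℤ, -(m : ℤ) ≤ j → j < κ → a (t + j) = b (s + j)) :
    Y.PP a t m κ → Y.PP b s m κ := by
  have h1 : Y.Z a t κ = Y.Z b s κ := Z_congr (fun j hj => h j (by omega) (by omega))
  have h2 : Y.Z a (t - m) m = Y.Z b (s - m) m := Z_congr (fun j hj => by
    have := h (j - m) (by omega) (by omega)
    rw [show t - (m : ℤ) + j = t + (j - m) by ring, show s - (m : ℤ) + j = s + (j - m) by ring]
    exact this)
  intro hP
  unfold PP at *
  rw [← h1, ← h2]
  exact hP

lemma Good_sh {a : ℤ → ℚ} {k t : ℤ} {κ : ℕ} : Y.Good (sh k a) t κ ↔ Y.Good a (t + k) κ := by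
  constructor
  · intro h m
    exact PP_congr (fun j _ _ => by simp only [sh]; congr 1; ring) (h m)
  · intro h m
    exact PP_congr (fun j _ _ => by simp only [sh]; congr 1; ring) (h m)

lemma PP_mono {a : ℤ → ℚ} {t : ℤ} {m κ κ' : ℕ} (hk : κ ≤ κ') (h : Y.PP a t m κ) :
    Y.PP a t m κ' := by
  have hc : closure (Y.Z a t κ') ⊆ closure (Y.Z a t κ) := closure_mono (Z_anti hk)
  exact ⟨fun q hq => h.1 q (hc hq), fun y hy z hz h1 h2 => h.2 y hy z hz (hc h1) (hc h2)⟩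

lemma Good_mono {a : ℤ → ℚ} {t : ℤ} {κ κ' : ℕ} (hk : κ ≤ κ') (h : Y.Good a t κ) :
    Y.Good a t κ' := fun m => PP_mono hk (h m)

/-- Pulled back points lie in the closure of the pulled back cylinder. -/
lemma pull_mem {a : ℤ → ℚ} {t : ℤ} {n κ : ℕ} (h : Y.PP a t n κ) {y : ℝ}
    (hy : y ∈ Y.Z a (t - n) n) (hfy : Y.f^[n] y ∈ closure (Y.Z a t κ)) :
    y ∈ closure (Y.Z a (t - n) (n + κ)) := by
  rw [Metric.mem_closure_iff]
  intro ε hε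
  obtain ⟨q, hq, hd⟩ := Metric.mem_closure_iff.1 hfy ε hε
  obtain ⟨w, hw, hwq⟩ := h.1 q (subset_closure hq)
  refine ⟨w, Z_append (s := t) (by ring) hw (by rw [hwq]; exact hq), ?_⟩
  have := h.2 y hy w hw hfy (by rw [hwq]; exact subset_closure hq)
  rw [Real.dist_eq] at *
  have h1 : Y.lam ^ n ≤ 1 := pow_le_one₀ Y.lam0.le Y.lam1.le
  rw [hwq] at this
  have h2 : Y.lam ^ n * |Y.f^[n] y - q| ≤ 1 * |Y.f^[n] y - q| :=
    mul_le_mul_of_nonneg_right h1 (abs_nonneg _)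
  linarith

lemma PP_comp {a : ℤ → ℚ} {t : ℤ} {n l κ κ' : ℕ} (h1 : Y.PP a t n κ')
    (h2 : Y.PP a (t - n) l κ) (hk : κ ≤ n + κ') : Y.PP a t (n + l) κ' := by
  have hsub : ∀ y ∈ Y.Z a (t - n) n, Y.f^[n] y ∈ closure (Y.Z a t κ') →
      y ∈ closure (Y.Z a (t - n) κ) := fun y hy hfy =>
    closure_mono (Z_anti hk) (pull_mem h1 hy hfy)
  have e1 : (t : ℤ) - ((n + l : ℕ) : ℤ) = t - n - l := by push_cast; ring
  unfold PP
  rw [e1]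
  constructor
  · intro q hq
    obtain ⟨y, hy, hyq⟩ := h1.1 q hq
    obtain ⟨w, hw, hwy⟩ := h2.1 y (hsub y hy (by rw [hyq]; exact hq))
    refine ⟨w, ?_, ?_⟩
    · rw [add_comm n l]
      exact Z_append (s := t - n) (by ring) hw (by rw [hwy]; exact hy)
    · rw [Function.iterate_add_apply, hwy, hyq]
  · intro y hy z hz hfy hfz
    rw [add_comm n l] at hy hz
    have hy1 : Y.f^[l] y ∈ Y.Z a (t - n) n := Z_tail (by ring) hy
    have hz1 : Y.f^[l] z ∈ Y.Z a (t - n) n := Z_tail (by ring) hz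
    rw [Function.iterate_add_apply] at hfy hfz ⊢
    rw [Function.iterate_add_apply]
    have b1 := h1.2 _ hy1 _ hz1 hfy hfz
    have b2 := h2.2 y (Z_anti (by omega) hy) z (Z_anti (by omega) hz) (hsub _ hy1 hfy)
      (hsub _ hz1 hfz)
    calc |y - z| ≤ Y.lam ^ l * |Y.f^[l] y - Y.f^[l] z| := b2
      _ ≤ Y.lam ^ l * (Y.lam ^ n * |Y.f^[n] (Y.f^[l] y) - Y.f^[n] (Y.f^[l] z)|) :=
        mul_le_mul_of_nonneg_left b1 (pow_nonneg Y.lam0.le _)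
      _ = _ := by rw [pow_add]; ring

lemma Good_of_local {a : ℤ → ℚ} {t : ℤ} {n κ κ' : ℕ} (h0 : Y.Good a (t - n) κ)
    (h1 : ∀ m ≤ n, Y.PP a t m κ') (hk : κ ≤ n + κ') : Y.Good a t κ' := by
  intro m
  by_cases hm : m ≤ n
  · exact h1 m hm
  · obtain ⟨l, rfl⟩ := Nat.exists_eq_add_of_le (not_le.1 hm).le
    exact PP_comp (h1 n le_rfl) (h0 l) hk

/-- Orbits inside `W`. -/
def Orb (Y : Sys) (x : ℤ → ℝ) : Prop := ∀ n, x n ∈ Y.W ∧ Y.f (x n) = x (n + 1)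

lemma Orb.iter {x : ℤ → ℝ} (h : Y.Orb x) (n : ℤ) (j : ℕ) : Y.f^[j] (x n) = x (n + j) := by
  induction j with
  | zero => simp
  | succ j ih =>
    rw [Function.iterate_succ_apply', ih, (h _).2]
    congr 1
    push_cast
    ring

lemma Orb.mem_Z {x : ℤ → ℝ} (h : Y.Orb x) {a : ℤ → ℚ} {t : ℤ} {k : ℕ} (n : ℤ)
    (ha : ∀ j : ℕ, j < k → Y.c (x (n + j)) = a (t + j)) : x n ∈ Y.Z a t k := by
  intro j hj
  rw [h.iter]
  exact ⟨(h _).1, ha j hj⟩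

/-- Two orbits with the same letters up to a good time are close. -/
lemma Orb.close {x y : ℤ → ℝ} (hx : Y.Orb x) (hy : Y.Orb y) {t κ : ℕ}
    (hg : Y.Good (fun n => Y.c (x n)) t κ)
    (ha : ∀ j : ℕ, j < t + κ → Y.c (x j) = Y.c (y j)) : |x 0 - y 0| ≤ Y.lam ^ t := by
  set a : ℤ → ℚ := fun n => Y.c (x n) with hadef
  have hx0 : x 0 ∈ Y.Z a (t - t) t := hx.mem_Z 0 (fun j _ => by simp [hadef])
  have hy0 : y 0 ∈ Y.Z a (t - t) t := hy.mem_Z 0 (fun j hj => by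
    have := ha j (by omega)
    simp [hadef, this])
  have hx1 : Y.f^[t] (x 0) ∈ closure (Y.Z a t κ) := by
    rw [hx.iter]
    exact subset_closure (hx.mem_Z _ (fun j _ => by simp [hadef]))
  have hy1 : Y.f^[t] (y 0) ∈ closure (Y.Z a t κ) := by
    rw [hy.iter]
    refine subset_closure (hy.mem_Z _ (fun j hj => ?_))
    have := ha (t + j) (by omega)
    simp only [hadef]
    push_cast at this
    rw [zero_add, this]
  have := (hg t).2 _ hx0 _ hy0 hx1 hy1
  have hM : |Y.f^[t] (x 0) - Y.f^[t] (y 0)| ≤ 1 := by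
    rw [hx.iter, hy.iter]
    have h1 := Y.hW (hx (0 + t)).1
    have h2 := Y.hW (hy (0 + t)).1
    simp only [Mset, Set.mem_Icc] at h1 h2
    rw [abs_le]; constructor <;> linarith
  calc |x 0 - y 0| ≤ _ := this
    _ ≤ Y.lam ^ t * 1 := mul_le_mul_of_nonneg_left hM (pow_nonneg Y.lam0.le _)
    _ = _ := mul_one _

/-- Realization of letter sequences with arbitrarily large good times. -/
lemma realize {a : ℤ → ℚ} {κ : ℕ}
    (hg : ∀ N : ℤ, ∃ t ≥ N, Y.Good a t (κ + 1) ∧ (Y.Z a t (κ + 1)).Nonempty) :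
    ∃ x : ℤ → ℝ, Y.Orb x ∧ ∀ n, Y.c (x n) = a n := by
  -- the set of points at time `k` pulled back from time `k + m`
  let Kt : ℤ → ℕ → Set ℝ := fun k m =>
    {z | z ∈ Y.Z a k m ∧ Y.f^[m] z ∈ closure (Y.Z a (k + m) (κ + 1))}
  have hZM : ∀ t, closure (Y.Z a t (κ + 1)) ⊆ Mset := fun t =>
    closure_minimal (fun z hz => Y.hW (hz 0 (by omega)).1) isClosed_Icc
  have key : ∀ (k : ℤ) (m : ℕ), Y.Good a (k + m) (κ + 1) → ∀ y ∈ Kt k m, ∀ z ∈ Kt k m,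
      |y - z| ≤ Y.lam ^ m * |Y.f^[m] y - Y.f^[m] z| := by
    intro k m hG y hy z hz
    have := (hG m).2
    rw [show k + (m : ℤ) - m = k by ring] at this
    exact this y hy.1 z hz.1 hy.2 hz.2
  have hcomp : ∀ (k : ℤ) (m : ℕ), Y.Good a (k + m) (κ + 1) → IsCompact (Kt k m) := by
    intro k m hG
    have hc : IsCompact (closure (Y.Z a (k + m) (κ + 1))) :=
      isCompact_Icc.of_isClosed_subset isClosed_closure (hZM _)
    have h1 := (hG m).1
    rw [show k + (m : ℤ) - m = k by ring] at h1
    choose! g hg1 hg2 using h1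
    have : Kt k m = g '' closure (Y.Z a (k + m) (κ + 1)) := by
      ext z
      constructor
      · intro hz
        refine ⟨Y.f^[m] z, hz.2, ?_⟩
        have := key k m hG (g (Y.f^[m] z)) ⟨hg1 _ hz.2, by rw [hg2 _ hz.2]; exact hz.2⟩ z hz
        rw [hg2 _ hz.2] at this
        simp only [sub_self, abs_zero, mul_zero] at this
        have := abs_nonpos_iff.1 this
        linarith
      · rintro ⟨q, hq, rfl⟩
        exact ⟨hg1 _ hq, by rw [hg2 _ hq]; exact hq⟩
    rw [this]
    refine hc.image_of_continuousOn ?_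
    have hL : LipschitzOnWith 1 g (closure (Y.Z a (k + m) (κ + 1))) := by
      refine LipschitzOnWith.of_dist_le_mul (fun p hp q hq => ?_)
      have := key k m hG (g p) ⟨hg1 _ hp, by rw [hg2 _ hp]; exact hp⟩ (g q)
        ⟨hg1 _ hq, by rw [hg2 _ hq]; exact hq⟩
      rw [hg2 _ hp, hg2 _ hq] at this
      rw [Real.dist_eq, Real.dist_eq]
      have h1 : Y.lam ^ m ≤ 1 := pow_le_one₀ Y.lam0.le Y.lam1.le
      have h2 : Y.lam ^ m * |p - q| ≤ 1 * |p - q| :=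
        mul_le_mul_of_nonneg_right h1 (abs_nonneg _)
      push_cast
      linarith
    exact hL.continuousOn
  have hne : ∀ (k : ℤ) (m : ℕ), Y.Good a (k + m) (κ + 1) →
      (Y.Z a (k + m) (κ + 1)).Nonempty → (Kt k m).Nonempty := by
    intro k m hG ⟨q, hq⟩
    obtain ⟨y, hy, hyq⟩ := (hG m).1 q (subset_closure hq)
    rw [show k + (m : ℤ) - m = k by ring] at hy
    exact ⟨y, hy, by rw [hyq]; exact subset_closure hq⟩
  have hdec : ∀ (k : ℤ) (m n : ℕ), Y.Good a (k + m) (κ + 1) → Y.Good a (k + (m + n : ℕ)) (κ + 1) →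
      Kt k (m + n) ⊆ Kt k m := by
    intro k m n _ hG z hz
    refine ⟨Z_anti (by omega) hz.1, ?_⟩
    have e : k + ((m + n : ℕ) : ℤ) - n = k + m := by push_cast; ring
    have h2 : Y.f^[m] z ∈ Y.Z a (k + (m + n : ℕ) - n) n := by
      rw [e]; exact Z_tail rfl hz.1
    have h3 : Y.f^[n] (Y.f^[m] z) ∈ closure (Y.Z a (k + (m + n : ℕ)) (κ + 1)) := by
      rw [← Function.iterate_add_apply, add_comm n m]; exact hz.2
    have := pull_mem (hG n) h2 h3
    rw [e] at this
    exact closure_mono (Z_anti (by omega)) this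
  -- a strictly increasing family of good times
  have hx : ∀ k : ℤ, ∃ x : ℝ, ∀ m : ℕ, Y.Good a (k + m) (κ + 1) → x ∈ Kt k m := by
    intro k
    let I := {m : ℕ // Y.Good a (k + m) (κ + 1) ∧ (Y.Z a (k + m) (κ + 1)).Nonempty}
    have hI : ∀ N : ℕ, ∃ i : I, N ≤ i.1 := by
      intro N
      obtain ⟨t, ht, h1, h2⟩ := hg (k + N)
      have e : k + ((t - k).toNat : ℤ) = t := by omega
      refine ⟨⟨(t - k).toNat, by rw [e]; exact ⟨h1, h2⟩⟩, ?_⟩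
      simp only
      omega
    haveI : Nonempty I := ⟨(hI 0).choose⟩
    have hdecI : ∀ i j : I, i.1 ≤ j.1 → Kt k j.1 ⊆ Kt k i.1 := by
      intro i j hij
      obtain ⟨n, hn⟩ := Nat.exists_eq_add_of_le hij
      rw [hn]
      exact hdec k i.1 n i.2.1 (by rw [← hn]; exact j.2.1)
    obtain ⟨x, hx⟩ := IsCompact.nonempty_iInter_of_directed_nonempty_isCompact_isClosed
      (fun i : I => Kt k i.1)
      (fun i j => by
        rcases le_total i.1 j.1 with h | h
        · exact ⟨j, hdecI i j h, subset_rfl⟩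
        · exact ⟨i, subset_rfl, hdecI j i h⟩)
      (fun i => hne k i.1 i.2.1 i.2.2) (fun i => hcomp k i.1 i.2.1)
      (fun i => (hcomp k i.1 i.2.1).isClosed)
    refine ⟨x, fun m hm => ?_⟩
    obtain ⟨i, hi⟩ := hI m
    have h1 := Set.mem_iInter.1 hx i
    obtain ⟨n, hn⟩ := Nat.exists_eq_add_of_le hi
    rw [hn] at h1
    exact hdec k m n hm (by rw [← hn]; exact i.2.1) h1
  choose x hx using hx
  have hbig : ∀ (k : ℤ) (N : ℕ), ∃ m : ℕ, N ≤ m ∧ Y.Good a (k + m) (κ + 1) := by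
    intro k N
    obtain ⟨t, ht, h1, h2⟩ := hg (k + N)
    refine ⟨(t - k).toNat, by omega, ?_⟩
    rw [show k + ((t - k).toNat : ℤ) = t by omega]
    exact h1
  refine ⟨x, fun n => ⟨?_, ?_⟩, fun n => ?_⟩
  · obtain ⟨m, hm, hG⟩ := hbig n 1
    exact ((hx n m hG).1 0 (by omega)).1
  · -- `f (x n)` and `x (n+1)` both lie in `Kt (n+1) m`
    have hle : ∀ N : ℕ, |Y.f (x n) - x (n + 1)| ≤ Y.lam ^ N := by
      intro N
      obtain ⟨m, hm, hG⟩ := hbig (n + 1) N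
      have e : n + 1 + (m : ℤ) = n + ((m + 1 : ℕ) : ℤ) := by push_cast; ring
      have h1 := hx (n + 1) m hG
      have h2 := hx n (m + 1) (by rw [← e]; exact hG)
      have h3 : Y.f (x n) ∈ Kt (n + 1) m := by
        refine ⟨?_, ?_⟩
        · have := h2.1
          rw [add_comm m 1] at this
          exact Z_tail (k := 1) (by simp) this
        · have := h2.2
          rw [Function.iterate_succ_apply] at this
          rw [e]; exact this
      have h4 := key _ _ hG _ h3 _ h1
      have m1 := hZM _ h3.2
      have m2 := hZM _ h1.2
      have hM : |Y.f^[m] (Y.f (x n)) - Y.f^[m] (x (n + 1))| ≤ 1 := by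
        simp only [Mset, Set.mem_Icc] at m1 m2
        rw [abs_le]; constructor <;> linarith
      calc _ ≤ _ := h4
        _ ≤ Y.lam ^ m * 1 := mul_le_mul_of_nonneg_left hM (pow_nonneg Y.lam0.le _)
        _ ≤ Y.lam ^ N := by
          rw [mul_one]
          exact pow_le_pow_of_le_one Y.lam0.le Y.lam1.le hm
    have h0 : Tendsto (fun N : ℕ => Y.lam ^ N) atTop (𝓝 0) :=
      tendsto_pow_atTop_nhds_zero_of_lt_one Y.lam0.le Y.lam1
    have := ge_of_tendsto' h0 hle
    have := abs_nonpos_iff.1 this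
    linarith
  · obtain ⟨m, hm, hG⟩ := hbig n 1
    have := ((hx n m hG).1 0 (by omega)).2
    simpa using this

end Sys

/-! ### The graph -/

namespace Sys

variable (Y : Sys)

/-- Vertices: level, position, block length, block word. -/
structure Vx where
  κ : ℕ
  p : ℕ
  n : ℕ
  l : List ℚ

instance : Countable Vx := by
  have : Function.Injective (fun v : Vx => (v.κ, v.p, v.n, v.l)) := by
    rintro ⟨a, b, c, d⟩ ⟨a', b', c', d'⟩ h
    simp only [Prod.mk.injEq] at h
    obtain ⟨rfl, rfl, rfl, rfl⟩ := h
    rfl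
  exact this.countable

/-- Admissible letter sequences of level `κ`. -/
def X (κ : ℕ) : Set (ℤ → ℚ) :=
  {a | (∃ x, Y.Orb x ∧ ∀ n, Y.c (x n) = a n) ∧ (∀ N : ℤ, ∃ t ≥ N, Y.Good a t (κ + 1)) ∧
    (∀ N : ℤ, ∃ t ≤ N, Y.Good a t (κ + 1)) ∧ ∀ t, ¬ Y.Good a t κ}

/-- The letter sequence `a` is at time zero at the vertex `v`. -/
structure At (v : Vx) (a : ℤ → ℚ) : Prop where
  g0 : Y.Good a (-(v.p : ℤ)) (v.κ + 1)
  lt : v.p < v.n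
  no : ∀ s : ℤ, -(v.p : ℤ) < s → s < (v.n : ℤ) - v.p → ¬ Y.Good a s (v.κ + 1)
  g1 : Y.Good a ((v.n : ℤ) - v.p) (v.κ + 1)
  hl : v.l = (List.range (v.n + (v.κ + 1))).map (fun j : ℕ => a (-(v.p : ℤ) + j))

/-- Edges. -/
def E1 (v w : Vx) : Prop := v.κ = w.κ ∧ ∃ a ∈ Y.X v.κ, Y.At v a ∧ Y.At w (sh 1 a)

variable {Y}

lemma At.window {v : Vx} {a b : ℤ → ℚ} (h : Y.At v a) (h' : Y.At v b) (j : ℤ)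
    (h1 : -(v.p : ℤ) ≤ j) (h2 : j < (v.n : ℤ) - v.p + (v.κ + 1)) : a j = b j := by
  have := h.hl.symm.trans h'.hl
  rw [List.map_inj_left] at this
  have := this (j + v.p).toNat (by rw [List.mem_range]; omega)
  rw [show -(v.p : ℤ) + ((j + v.p).toNat : ℤ) = j by omega] at this
  exact this

lemma At.unique {v w : Vx} {a : ℤ → ℚ} (h : Y.At v a) (h' : Y.At w a) (hk : v.κ = w.κ) :
    v = w := by
  obtain ⟨κ, p, n, l⟩ := v
  obtain ⟨κ', p', n', l'⟩ := w
  obtain ⟨g0, lt, no, g1, hl⟩ := h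
  obtain ⟨g0', lt', no', g1', hl'⟩ := h'
  simp only at *
  subst hk
  have hp : p = p' := by
    rcases lt_trichotomy p p' with h | h | h
    · exact absurd g0 (no' _ (by omega) (by omega))
    · exact h
    · exact absurd g0' (no _ (by omega) (by omega))
  subst hp
  have hn : n = n' := by
    rcases lt_trichotomy n n' with h | h | h
    · exact absurd g1 (no' _ (by omega) (by omega))
    · exact h
    · exact absurd g1' (no _ (by omega) (by omega))
  subst hn
  rw [hl, hl']

lemma X_level {κ κ' : ℕ} {a : ℤ → ℚ} (h : a ∈ Y.X κ) (h' : a ∈ Y.X κ') : κ = κ' := by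
  rcases lt_trichotomy κ κ' with hk | hk | hk
  · obtain ⟨t, _, ht⟩ := h.2.1 0
    exact absurd (Good_mono hk ht) (h'.2.2.2 t)
  · exact hk
  · obtain ⟨t, _, ht⟩ := h'.2.1 0
    exact absurd (Good_mono hk ht) (h.2.2.2 t)

lemma X_sh {κ : ℕ} {a : ℤ → ℚ} (k : ℤ) (h : a ∈ Y.X κ) : sh k a ∈ Y.X κ := by
  obtain ⟨⟨x, hx, hxa⟩, h1, h2, h3⟩ := h
  refine ⟨⟨sh k x, ?_, fun n => hxa _⟩, ?_, ?_, ?_⟩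
  · intro n
    refine ⟨(hx _).1, ?_⟩
    simp only [sh]
    rw [(hx _).2]
    congr 1
    ring
  · intro N
    obtain ⟨t, ht, hg⟩ := h1 (N + k)
    exact ⟨t - k, by omega, by rw [Good_sh]; simpa using hg⟩
  · intro N
    obtain ⟨t, ht, hg⟩ := h2 (N + k)
    exact ⟨t - k, by omega, by rw [Good_sh]; simpa using hg⟩
  · intro t ht
    rw [Good_sh] at ht
    exact h3 _ ht

/-- Every admissible sequence is at some vertex. -/
lemma exists_At {κ : ℕ} {a : ℤ → ℚ} (h : a ∈ Y.X κ) : ∃ v : Vx, v.κ = κ ∧ Y.At v a := by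
  classical
  have hp : ∃ p : ℕ, Y.Good a (-(p : ℤ)) (κ + 1) := by
    obtain ⟨t, ht, hg⟩ := h.2.2.1 0
    exact ⟨(-t).toNat, by rw [show -((-t).toNat : ℤ) = t by omega]; exact hg⟩
  have hq : ∃ q : ℕ, 0 < q ∧ Y.Good a (q : ℤ) (κ + 1) := by
    obtain ⟨t, ht, hg⟩ := h.2.1 1
    exact ⟨t.toNat, by omega, by rw [show (t.toNat : ℤ) = t by omega]; exact hg⟩
  set p := Nat.find hp with hpd
  set q := Nat.find hq with hqd
  have p1 := Nat.find_spec hp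
  have q1 := Nat.find_spec hq
  rw [← hpd] at p1
  rw [← hqd] at q1
  refine ⟨⟨κ, p, p + q, (List.range (p + q + (κ + 1))).map (fun j : ℕ => a (-(p : ℤ) + j))⟩, rfl, ⟨p1, by simp only; omega, ?_, ?_, rfl⟩⟩
  · simp only
    intro s hs1 hs2 hg
    by_cases hs : s ≤ 0
    · refine Nat.find_min hp (m := (-s).toNat) (by omega) ?_
      rw [show -((-s).toNat : ℤ) = s by omega]; exact hg
    · refine Nat.find_min hq (m := s.toNat) (by omega) ⟨by omega, ?_⟩
      rw [show (s.toNat : ℤ) = s by omega]; exact hg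
  · simp only
    rw [show ((p + q : ℕ) : ℤ) - p = q by push_cast; ring]
    exact q1.2

/-- Soundness: every path comes from an admissible letter sequence. -/
lemma path_sound {v : ℤ → Vx} (hv : ∀ n, Y.E1 (v n) (v (n + 1))) :
    ∃ κ, ∃ a ∈ Y.X κ, ∀ n, (v n).κ = κ ∧ Y.At (v n) (sh n a) := by
  have hκ : ∀ n, (v n).κ = (v 0).κ := by
    intro n
    induction n using Int.induction_on with
    | zero => rfl
    | succ i ih => rw [← ih]; exact (hv i).1.symm
    | pred i ih =>
      rw [← ih]
      have := (hv (-(i : ℤ) - 1)).1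
      rw [this]; congr 2; ring
  set κ := (v 0).κ with hκd
  choose _ b hbX hA1 hA2 using hv
  set p : ℤ → ℤ := fun k => (v k).p with hpd
  set e : ℤ → ℤ := fun k => ((v k).n : ℤ) - (v k).p with hed
  have hp0 : ∀ k, 0 ≤ p k := fun k => by simp only [hpd]; omega
  have he1 : ∀ k, 1 ≤ e k := fun k => by have := (hA1 k).lt; simp only [hed]; omega
  have g0 : ∀ k, Y.Good (b k) (-p k) (κ + 1) := fun k => by
    have := (hA1 k).g0; rw [hκ] at this; exact this
  have g1 : ∀ k, Y.Good (b k) (e k) (κ + 1) := fun k => by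
    have := (hA1 k).g1; rw [hκ] at this; exact this
  have no : ∀ k s, -p k < s → s < e k → ¬ Y.Good (b k) s (κ + 1) := fun k s h1 h2 => by
    have := (hA1 k).no s h1 h2; rw [hκ] at this; exact this
  have g0' : ∀ k, Y.Good (b k) (-p (k + 1) + 1) (κ + 1) := fun k => by
    have := (hA2 k).g0; rw [hκ, Good_sh] at this; exact this
  have g1' : ∀ k, Y.Good (b k) (e (k + 1) + 1) (κ + 1) := fun k => by
    have := (hA2 k).g1; rw [hκ, Good_sh] at this; exact this
  have no' : ∀ k s, -p (k + 1) + 1 < s → s < e (k + 1) + 1 → ¬ Y.Good (b k) s (κ + 1) :=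
    fun k s h1 h2 => by
      have := (hA2 k).no (s - 1) (by simp only [hpd] at h1; omega) (by simp only [hed] at h2; omega)
      rw [hκ, Good_sh] at this
      simpa using this
  have F2 : ∀ k j, -p (k + 1) ≤ j → j < e (k + 1) + (κ + 1) → b k (j + 1) = b (k + 1) j := by
    intro k j h1 h2
    have := (hA2 k).window (hA1 (k + 1)) j h1 (by rw [hκ]; exact h2)
    exact this
  have F3a : ∀ k, 1 < e k → p (k + 1) = p k + 1 ∧ e (k + 1) = e k - 1 := by
    intro k hk
    have := hp0 k
    have := hp0 (k + 1)
    have := he1 (k + 1)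
    constructor
    · rcases lt_trichotomy (p (k + 1)) (p k + 1) with h | h | h
      · exact absurd (g0' k) (no k _ (by omega) (by omega))
      · exact h
      · exact absurd (g0 k) (no' k _ (by omega) (by omega))
    · rcases lt_trichotomy (e (k + 1)) (e k - 1) with h | h | h
      · exact absurd (g1' k) (no k _ (by omega) (by omega))
      · exact h
      · exact absurd (g1 k) (no' k _ (by omega) (by omega))
  have F3b : ∀ k, e k = 1 → p (k + 1) = 0 := by
    intro k hk
    have := hp0 (k + 1)
    have := he1 (k + 1)
    by_contra hne
    have := g1 k
    rw [hk] at this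
    exact no' k 1 (by omega) (by omega) this
  have he' : ∀ k, e k - 1 ≤ e (k + 1) := fun k => by
    rcases (he1 k).lt_or_eq with h | h
    · rw [(F3a k h).2]
    · have := he1 (k + 1); omega
  have F3c : ∀ k, 0 < p (k + 1) → 1 < e k := fun k h => by
    rcases (he1 k).lt_or_eq with h' | h'
    · exact h'
    · have := F3b k h'.symm; omega
  set a : ℤ → ℚ := fun k => b k 0 with had
  have F4p : ∀ (j : ℕ) (k : ℤ), (j : ℤ) < e k + (κ + 1) → b k j = a (k + j) := by
    intro j
    induction j with
    | zero => intro k _; simp [had]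
    | succ j ih =>
      intro k hk
      have h1 := he' k
      push_cast at hk ⊢
      have := hp0 (k + 1)
      rw [F2 k j (by omega) (by omega), ih (k + 1) (by omega)]
      congr 1; ring
  have F4n : ∀ (j : ℕ) (k : ℤ), (j : ℤ) ≤ p k → b k (-j) = a (k - j) := by
    intro j
    induction j with
    | zero => intro k _; simp [had]
    | succ j ih =>
      intro k hk
      obtain ⟨k, rfl⟩ : ∃ k', k = k' + 1 := ⟨k - 1, by ring⟩
      push_cast at hk ⊢
      have h1 := F3c k (by omega)
      have h2 := F3a k h1
      have := F2 k (-1 - j) (by omega) (by have := he1 (k + 1); omega)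
      rw [show -((j : ℤ) + 1) = -1 - j by ring, ← this, show -1 - (j : ℤ) + 1 = -j by ring,
        ih k (by omega)]
      congr 1; ring
  have F4 : ∀ k j : ℤ, -p k ≤ j → j < e k + (κ + 1) → b k j = a (k + j) := by
    intro k j h1 h2
    by_cases hj : 0 ≤ j
    · have := F4p j.toNat k (by omega)
      rwa [show (j.toNat : ℤ) = j by omega] at this
    · have := F4n (-j).toNat k (by omega)
      rwa [show -((-j).toNat : ℤ) = j by omega, show k - ((-j).toNat : ℤ) = k + j by omega] at this
  -- transfer of `PP`
  have tr : ∀ (k s : ℤ) (m κ' : ℕ), -p k ≤ s - m → s + κ' ≤ e k + (κ + 1) →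
      Y.PP (b k) s m κ' → Y.PP a (k + s) m κ' := by
    intro k s m κ' h1 h2
    refine PP_congr (fun j hj1 hj2 => ?_)
    rw [F4 k (s + j) (by omega) (by omega)]
    congr 1; ring
  have tr' : ∀ (k s : ℤ) (m κ' : ℕ), -p k ≤ s - m → s + κ' ≤ e k + (κ + 1) →
      Y.PP a (k + s) m κ' → Y.PP (b k) s m κ' := by
    intro k s m κ' h1 h2
    refine PP_congr (fun j hj1 hj2 => ?_)
    rw [F4 k (s + j) (by omega) (by omega)]
    congr 1; ring
  have base0 : ∀ (i : ℕ) (k : ℤ), p k = i → p (k - i) = 0 := by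
    intro i
    induction i with
    | zero => intro k hk; simpa using hk
    | succ i ih =>
      intro k hk
      obtain ⟨k, rfl⟩ : ∃ k', k = k' + 1 := ⟨k - 1, by ring⟩
      push_cast at hk ⊢
      have h1 := F3c k (by omega)
      have h2 := F3a k h1
      have := ih k (by omega)
      rwa [show k + 1 - ((i : ℤ) + 1) = k - i by ring]
  have base : ∀ k, ∃ k', k - p k = k' + e k' := by
    intro k
    have h0 := base0 (p k).toNat k (by have := hp0 k; omega)
    rw [show ((p k).toNat : ℤ) = p k by have := hp0 k; omega] at h0
    refine ⟨k - p k - 1, ?_⟩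
    have h1 := he1 (k - p k - 1)
    rcases h1.lt_or_eq with h | h
    · have := (F3a _ h).1
      rw [show k - p k - 1 + 1 = k - p k by ring] at this
      have := hp0 (k - p k - 1)
      omega
    · omega
  have gGood : ∀ (m : ℕ) (k : ℤ), Y.PP a (k + e k) m (κ + 1) := by
    intro m
    induction m using Nat.strong_induction_on with
    | _ m ih =>
      intro k
      have := he1 k
      have := hp0 k
      by_cases hm : (m : ℤ) ≤ e k + p k
      · exact tr k (e k) m (κ + 1) (by omega) (by push_cast; omega) (g1 k m)
      · obtain ⟨k', hk'⟩ := base k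
        obtain ⟨n, hn⟩ : ∃ n : ℕ, (n : ℤ) = e k + p k := ⟨(e k + p k).toNat, by omega⟩
        obtain ⟨l, rfl⟩ := Nat.exists_eq_add_of_le (show n ≤ m by omega)
        refine PP_comp (κ := κ + 1) (tr k (e k) n (κ + 1) (by omega) (by push_cast; omega) (g1 k n))
          ?_ (by omega)
        rw [show k + e k - (n : ℤ) = k' + e k' by omega]
        exact ih l (by omega) k'
  have gG : ∀ k, Y.Good a (k + e k) (κ + 1) := fun k m => gGood m k
  have gG' : ∀ k, Y.Good a (k - p k) (κ + 1) := fun k => by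
    obtain ⟨k', hk'⟩ := base k
    rw [hk']; exact gG k'
  refine ⟨κ, a, ⟨?_, ?_, ?_, ?_⟩, fun n => ⟨hκ n, ⟨?_, (hA1 n).lt, ?_, ?_, ?_⟩⟩⟩
  · refine realize (κ := κ) (fun N => ⟨N + e N, by have := he1 N; omega, gG N, ?_⟩)
    obtain ⟨x, hx, hxa⟩ := (hbX N).1
    have := hp0 N
    have := he1 N
    refine ⟨x (e N), hx.mem_Z _ (fun j hj => ?_)⟩
    rw [hxa, F4 N _ (by omega) (by omega)]
    congr 1; ring
  · exact fun N => ⟨N + e N, by have := he1 N; omega, gG N⟩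
  · exact fun N => ⟨N - p N, by have := hp0 N; omega, gG' N⟩
  · intro t ht
    obtain ⟨k, rfl⟩ : ∃ k', t = k' + 1 := ⟨t - 1, by ring⟩
    have h1 := he1 k
    have h2 := hp0 k
    obtain ⟨n, hn⟩ : ∃ n : ℕ, (n : ℤ) = 1 + p k := ⟨(1 + p k).toNat, by omega⟩
    have hX := (hbX k).2.2.2 1
    rw [hκ] at hX
    refine hX (Good_of_local (n := n) (κ := κ + 1) ?_ (fun m hm => ?_) (by omega))
    · rw [show (1 : ℤ) - n = -p k by omega]; exact g0 k
    · exact tr' k 1 m κ (by omega) (by omega) (ht m)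
  · rw [Good_sh, hκ, show -((v n).p : ℤ) + n = n - p n by simp only [hpd]; ring]
    exact gG' n
  · intro s h1 h2 hg
    rw [Good_sh, hκ] at hg
    change -p n < s at h1
    change s < e n at h2
    have h3 := hp0 n
    obtain ⟨i, hi⟩ : ∃ i : ℕ, (i : ℤ) = s + p n := ⟨(s + p n).toNat, by omega⟩
    refine no n s h1 h2 (Good_of_local (n := i) (κ := κ + 1) ?_ (fun m hm => ?_) (by omega))
    · rw [show s - (i : ℤ) = -p n by omega]; exact g0 n
    · refine tr' n s m (κ + 1) (by omega) (by push_cast; omega) ?_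
      rw [add_comm]; exact hg m
  · rw [Good_sh, hκ, show ((v n).n : ℤ) - (v n).p + n = n + e n by simp only [hed]; ring]
    exact gG n
  · rw [(hA1 n).hl, List.map_inj_left]
    intro j hj
    rw [List.mem_range, hκ] at hj
    simp only [sh]
    have h3 := (hA1 n).lt
    rw [F4 n _ (by simp only [hpd]; omega) (by simp only [hed]; omega)]
    congr 1; ring

/-- The orbit `x` is coded by the path `v`. -/
def Rep (Y : Sys) (v : ℤ → Vx) (x : ℤ → ℝ) : Prop :=
  Y.Orb x ∧ ∃ κ, (fun n => Y.c (x n)) ∈ Y.X κ ∧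
    ∀ n, (v n).κ = κ ∧ Y.At (v n) (sh n (fun n => Y.c (x n)))

lemma Rep.exists_of_path {v : ℤ → Vx} (hv : ∀ n, Y.E1 (v n) (v (n + 1))) : ∃ x, Y.Rep v x := by
  obtain ⟨κ, a, ha, h⟩ := path_sound hv
  obtain ⟨x, hx, hxa⟩ := ha.1
  have : (fun n => Y.c (x n)) = a := funext hxa
  exact ⟨x, hx, κ, by rw [this]; exact ⟨ha, h⟩⟩

lemma sh_sh {α : Type*} (k l : ℤ) (a : ℤ → α) : sh k (sh l a) = sh (k + l) a := by
  funext n; simp only [sh]; congr 1; ring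

lemma Orb.sh {x : ℤ → ℝ} (h : Y.Orb x) (k : ℤ) : Y.Orb (sh k x) := by
  intro n
  refine ⟨(h _).1, ?_⟩
  simp only [OneDim.sh]
  rw [(h _).2]
  congr 1
  ring

lemma Rep.shift {v : ℤ → Vx} {x : ℤ → ℝ} (h : Y.Rep v x) (k : ℤ) : Y.Rep (sh k v) (sh k x) := by
  obtain ⟨hx, κ, hX, hA⟩ := h
  refine ⟨hx.sh k, κ, X_sh k hX, fun n => ⟨(hA _).1, ?_⟩⟩
  have := (hA (n + k)).2
  rw [← sh_sh] at this
  exact this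

lemma Rep.path {v : ℤ → Vx} {x : ℤ → ℝ} (h : Y.Rep v x) (n : ℤ) : Y.E1 (v n) (v (n + 1)) := by
  obtain ⟨hx, κ, hX, hA⟩ := h
  refine ⟨by rw [(hA _).1, (hA _).1], _, ?_, (hA n).2, ?_⟩
  · rw [(hA _).1]; exact X_sh n hX
  · rw [sh_sh, add_comm 1 n]; exact (hA (n + 1)).2

lemma Rep.unique {v w : ℤ → Vx} {x : ℤ → ℝ} (h : Y.Rep v x) (h' : Y.Rep w x) : v = w := by
  obtain ⟨hx, κ, hX, hA⟩ := h
  obtain ⟨_, κ', hX', hA'⟩ := h'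
  have := X_level hX hX'
  funext n
  exact (hA n).2.unique (hA' n).2 (by rw [(hA n).1, (hA' n).1, this])

lemma Rep.exists_of_X {x : ℤ → ℝ} {κ : ℕ} (hx : Y.Orb x) (h : (fun n => Y.c (x n)) ∈ Y.X κ) :
    ∃ v, Y.Rep v x := by
  have : ∀ n, ∃ v : Vx, v.κ = κ ∧ Y.At v (OneDim.sh n (fun n => Y.c (x n))) :=
    fun n => exists_At (X_sh n h)
  choose v hv using this
  exact ⟨v, hx, κ, h, hv⟩

lemma Rep.close {v w : ℤ → Vx} {x y : ℤ → ℝ} (h : Y.Rep v x) (h' : Y.Rep w y) (N : ℕ)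
    (hvw : ∀ n : ℕ, n ≤ N → v n = w n) : |x 0 - y 0| ≤ Y.lam ^ N := by
  obtain ⟨hx, κ, hX, hA⟩ := h
  obtain ⟨hy, κ', hX', hA'⟩ := h'
  have hlt := (hA N).2.lt
  obtain ⟨e, he⟩ : ∃ e : ℕ, (v N).n = (v N).p + e := ⟨(v N).n - (v N).p, by omega⟩
  have hg := (hA N).2.g1
  rw [Good_sh, (hA N).1, he] at hg
  push_cast at hg
  have hag : ∀ j : ℕ, j < N + e + (κ + 1) → Y.c (x j) = Y.c (y j) := by
    intro j hj
    -- use the vertex at time `min j N`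
    by_cases hjN : j ≤ N
    · have h1 := hA' j
      rw [← hvw j hjN] at h1
      have := (hA j).2.window h1.2 0 (by omega) (by have := (hA j).2.lt; omega)
      simpa [OneDim.sh] using this
    · have h1 := hA' N
      rw [← hvw N le_rfl] at h1
      have := (hA N).2.window h1.2 (j - N) (by omega) (by rw [(hA N).1]; omega)
      simpa [OneDim.sh] using this
  have := hx.close hy (t := N + e) (κ := κ + 1) (by
    rw [show ((N + e : ℕ) : ℤ) = ((v N).p : ℤ) + e - (v N).p + N by push_cast; ring]
    exact hg) (by simpa [add_assoc] using hag)
  exact this.trans (pow_le_pow_of_le_one Y.lam0.le Y.lam1.le (by omega))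

end Sys


/-! ### Assembling the coding -/

namespace Sys

variable {Y : Sys} {P : Set ℝ}

/-- Edges of the full graph: the Markov part and the periodic part. -/
def EE (Y : Sys) (P : Set ℝ) : Vx ⊕ P → Vx ⊕ P → Prop
  | Sum.inl v, Sum.inl w => Y.E1 v w
  | Sum.inr p, Sum.inr q => Y.f p = q
  | _, _ => False

/-- The path `v` codes `x`. -/
def RepS (Y : Sys) (P : Set ℝ) (v : ℤ → Vx ⊕ P) (x : ℤ → ℝ) : Prop :=
  (∃ u : ℤ → Vx, v = (fun n => Sum.inl (u n)) ∧ Y.Rep u x) ∨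
  (∃ u : ℤ → P, v = (fun n => Sum.inr (u n)) ∧ ∀ n, (u n : ℝ) = x n ∧ Y.f (x n) = x (n + 1))

lemma RepS.exists_of_path {v : ℤ → Vx ⊕ P} (hv : ∀ n, Y.EE P (v n) (v (n + 1))) :
    ∃ x, Y.RepS P v x := by
  rcases h0 : v 0 with u0 | p0
  · have hall : ∀ n, ∃ u, v n = Sum.inl u := by
      intro n
      induction n using Int.induction_on with
      | zero => exact ⟨u0, h0⟩
      | succ i ih =>
        obtain ⟨u, hu⟩ := ih
        have := hv i
        rw [hu] at this
        rcases h : v (i + 1) with u' | p'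
        · exact ⟨u', rfl⟩
        · rw [h] at this; exact this.elim
      | pred i ih =>
        obtain ⟨u, hu⟩ := ih
        have := hv (-(i : ℤ) - 1)
        rw [show -(i : ℤ) - 1 + 1 = -i by ring, hu] at this
        rcases h : v (-(i : ℤ) - 1) with u' | p'
        · exact ⟨u', rfl⟩
        · rw [h] at this; exact this.elim
    choose u hu using hall
    have : ∀ n, Y.E1 (u n) (u (n + 1)) := fun n => by
      have := hv n
      rw [hu, hu] at this
      exact this
    obtain ⟨x, hx⟩ := Rep.exists_of_path this
    exact ⟨x, Or.inl ⟨u, funext hu, hx⟩⟩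
  · have hall : ∀ n, ∃ u, v n = Sum.inr u := by
      intro n
      induction n using Int.induction_on with
      | zero => exact ⟨p0, h0⟩
      | succ i ih =>
        obtain ⟨u, hu⟩ := ih
        have := hv i
        rw [hu] at this
        rcases h : v (i + 1) with u' | p'
        · rw [h] at this; exact this.elim
        · exact ⟨p', rfl⟩
      | pred i ih =>
        obtain ⟨u, hu⟩ := ih
        have := hv (-(i : ℤ) - 1)
        rw [show -(i : ℤ) - 1 + 1 = -i by ring, hu] at this
        rcases h : v (-(i : ℤ) - 1) with u' | p'
        · rw [h] at this; exact this.elim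
        · exact ⟨p', rfl⟩
    choose u hu using hall
    refine ⟨fun n => u n, Or.inr ⟨u, funext hu, fun n => ⟨rfl, ?_⟩⟩⟩
    have := hv n
    rw [hu, hu] at this
    exact this

lemma RepS.shift {v : ℤ → Vx ⊕ P} {x : ℤ → ℝ} (h : Y.RepS P v x) (k : ℤ) :
    Y.RepS P (sh k v) (sh k x) := by
  rcases h with ⟨u, rfl, h⟩ | ⟨u, rfl, h⟩
  · exact Or.inl ⟨sh k u, rfl, h.shift k⟩
  · refine Or.inr ⟨sh k u, rfl, fun n => ⟨(h _).1, ?_⟩⟩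
    simp only [OneDim.sh]
    rw [(h _).2]
    congr 1
    ring

lemma RepS.path {v : ℤ → Vx ⊕ P} {x : ℤ → ℝ} (h : Y.RepS P v x) (n : ℤ) :
    Y.EE P (v n) (v (n + 1)) := by
  rcases h with ⟨u, rfl, h⟩ | ⟨u, rfl, h⟩
  · exact h.path n
  · change Y.f (u n) = u (n + 1)
    rw [(h n).1, (h n).2, (h (n + 1)).1]

lemma RepS.close {v w : ℤ → Vx ⊕ P} {x y : ℤ → ℝ} (h : Y.RepS P v x) (h' : Y.RepS P w y) (N : ℕ)
    (hvw : ∀ n : ℕ, n ≤ N → v n = w n) : |x 0 - y 0| ≤ Y.lam ^ N := by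
  rcases h with ⟨u, rfl, h⟩ | ⟨u, rfl, h⟩ <;> rcases h' with ⟨u', rfl, h'⟩ | ⟨u', rfl, h'⟩
  · exact h.close h' N (fun n hn => Sum.inl_injective (hvw n hn))
  · exact absurd (hvw 0 (by omega)) (by simp)
  · exact absurd (hvw 0 (by omega)) (by simp)
  · have := Sum.inr_injective (hvw 0 (by omega))
    simp only [Nat.cast_zero] at this
    rw [← (h 0).1, ← (h' 0).1, this, sub_self, abs_zero]
    exact pow_nonneg Y.lam0.le _

lemma RepS.unique_point {v : ℤ → Vx ⊕ P} {x y : ℤ → ℝ} (h : Y.RepS P v x) (h' : Y.RepS P v y) :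
    x = y := by
  funext n
  have hle : ∀ N : ℕ, |x n - y n| ≤ Y.lam ^ N := fun N => by
    have := (h.shift n).close (h'.shift n) N (fun _ _ => rfl)
    simpa [OneDim.sh] using this
  have h0 : Tendsto (fun N : ℕ => Y.lam ^ N) atTop (𝓝 0) :=
    tendsto_pow_atTop_nhds_zero_of_lt_one Y.lam0.le Y.lam1
  have := ge_of_tendsto' h0 hle
  have := abs_nonpos_iff.1 this
  linarith

open Classical in
/-- The coding map. -/
def prj (Y : Sys) (P : Set ℝ) (v : ℤ → Vx ⊕ P) : ℤ → ℝ :=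
  if h : ∃ x, Y.RepS P v x then h.choose else 0

lemma RepS.prj_eq {v : ℤ → Vx ⊕ P} {x : ℤ → ℝ} (h : Y.RepS P v x) : Y.prj P v = x := by
  have hex : ∃ x, Y.RepS P v x := ⟨x, h⟩
  unfold prj
  rw [dif_pos hex]
  exact hex.choose_spec.unique_point h

lemma rep_prj {v : ℤ → Vx ⊕ P} (hv : ∀ n, Y.EE P (v n) (v (n + 1))) : Y.RepS P v (Y.prj P v) := by
  obtain ⟨x, hx⟩ := RepS.exists_of_path hv
  rw [hx.prj_eq]
  exact hx

lemma RepS.inMhat {v : ℤ → Vx ⊕ P} {x : ℤ → ℝ} (hP : P ⊆ Mset) (h : Y.RepS P v x) :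
    inMhat Y.f x := by
  rcases h with ⟨u, rfl, h⟩ | ⟨u, rfl, h⟩
  · refine ⟨fun n => Y.hW (h.1 n).1, fun n => ?_⟩
    rw [(h.1 (n - 1)).2]; congr 1; ring
  · refine ⟨fun n => hP (by rw [← (h n).1]; exact (u n).2), fun n => ?_⟩
    rw [(h (n - 1)).2]; congr 1; ring

lemma dSigma_ge {V : Type*} {v w : ℤ → V} (n : ℤ) (h : v n ≠ w n) :
    Real.exp (-|(n : ℝ)|) ≤ dSigma v w := by
  refine le_csSup ⟨1, ?_⟩ ⟨n, h, rfl⟩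
  rintro t ⟨m, _, rfl⟩
  rw [Real.exp_le_one_iff]
  simp

lemma holder (hP : P ⊆ Mset) : ∃ C > 0, ∃ α : ℝ, 0 < α ∧ α ≤ 1 ∧
    ∀ v w : ℤ → Vx ⊕ P, (∀ n, Y.EE P (v n) (v (n + 1))) → (∀ n, Y.EE P (w n) (w (n + 1))) →
      dhat (Y.prj P v) (Y.prj P w) ≤ C * dSigma v w ^ α := by
  have hlog : 0 < -Real.log Y.lam := by
    have := Real.log_neg Y.lam0 Y.lam1; linarith
  have hl2 : 0 < Real.log 2 := Real.log_pos (by norm_num)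
  have hl21 : Real.log 2 ≤ 1 := by have := Real.log_two_lt_d9; linarith
  set α := min (-Real.log Y.lam) (Real.log 2) with hα
  have hα0 : 0 < α := lt_min hlog hl2
  have hC : 1 ≤ Y.lam⁻¹ := (one_le_inv₀ Y.lam0).2 Y.lam1.le
  refine ⟨Y.lam⁻¹, inv_pos.2 Y.lam0, α, hα0, (min_le_right _ _).trans hl21, ?_⟩
  intro v w hv hw
  have rv := rep_prj hv
  have rw' := rep_prj hw
  set x := Y.prj P v
  set y := Y.prj P w
  have mx := rv.inMhat hP
  have my := rw'.inMhat hP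
  by_cases hvw : v = w
  · have hxy : x = y := by simp only [x, y, hvw]
    have : dSigma v w = 0 := by
      unfold dSigma
      rw [hvw]; simp
    rw [this, Real.zero_rpow hα0.ne', mul_zero]
    refine Real.sSup_nonpos ?_
    rintro t ⟨n, _, rfl⟩
    rw [hxy]; simp
  · classical
    have hex : ∃ N : ℕ, ∃ n : ℤ, n.natAbs = N ∧ v n ≠ w n := by
      by_contra hc
      push Not at hc
      exact hvw (funext fun n => hc _ n rfl)
    obtain ⟨n0, hn0, hne⟩ := Nat.find_spec hex
    set N := Nat.find hex with hN
    have hmin : ∀ n : ℤ, n.natAbs < N → v n = w n := by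
      intro n hn
      by_contra hc
      exact Nat.find_min hex hn ⟨n, rfl, hc⟩
    have hd : Real.exp (-(N : ℝ)) ≤ dSigma v w := by
      have := dSigma_ge n0 hne
      have e : |(n0 : ℝ)| = N := by
        rw [← hn0]; simp [Nat.cast_natAbs]
      rwa [e] at this
    have hd2 : Real.exp (-(α * N)) ≤ dSigma v w ^ α := by
      calc Real.exp (-(α * N)) = Real.exp (-(N : ℝ)) ^ α := by
            rw [← Real.exp_mul]; congr 1; ring
        _ ≤ _ := Real.rpow_le_rpow (Real.exp_pos _).le hd hα0.le
    have hpos : 0 ≤ dSigma v w ^ α := (Real.exp_pos _).le.trans hd2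
    refine Real.sSup_le ?_ (by positivity)
    rintro t ⟨n, hn, rfl⟩
    have hM : |x n - y n| ≤ 1 := by
      have h1 := mx.1 n
      have h2 := my.1 n
      simp only [Mset, Set.mem_Icc] at h1 h2
      rw [abs_le]; constructor <;> linarith
    by_cases hk : (-n).toNat < N
    · have h1 : |x n - y n| ≤ Y.lam ^ (N - 1) := by
        have := (rv.shift n).close (rw'.shift n) (N - 1) (fun j hj => hmin _ (by omega))
        simpa [OneDim.sh] using this
      have h2 : (2 : ℝ) ^ n ≤ 1 := zpow_le_one_of_nonpos₀ (by norm_num) hn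
      have h3 : Y.lam ^ (N - 1) = Y.lam⁻¹ * Y.lam ^ N := by
        obtain ⟨M, hM⟩ : ∃ M, N = M + 1 := ⟨N - 1, by omega⟩
        rw [hM, Nat.add_sub_cancel, pow_succ]
        field_simp [Y.lam0.ne']
      have h4 : Y.lam ^ N ≤ Real.exp (-(α * N)) := by
        rw [← Real.exp_log Y.lam0, ← Real.exp_nat_mul]
        refine Real.exp_le_exp.2 ?_
        have := min_le_left (-Real.log Y.lam) (Real.log 2)
        rw [← hα] at this
        have hN0 : (0 : ℝ) ≤ N := by positivity
        nlinarith
      calc (2 : ℝ) ^ n * |x n - y n| ≤ 1 * Y.lam ^ (N - 1) :=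
            mul_le_mul h2 h1 (abs_nonneg _) (by norm_num)
        _ = Y.lam⁻¹ * Y.lam ^ N := by rw [one_mul, h3]
        _ ≤ Y.lam⁻¹ * dSigma v w ^ α :=
            mul_le_mul_of_nonneg_left (h4.trans hd2) (inv_nonneg.2 Y.lam0.le)
    · have h2 : (2 : ℝ) ^ n ≤ Real.exp (-(α * N)) := by
        rw [show (2 : ℝ) ^ n = Real.exp (Real.log 2 * n) by
          rw [Real.exp_mul, Real.exp_log (by norm_num), Real.rpow_intCast]]
        refine Real.exp_le_exp.2 ?_
        have := min_le_right (-Real.log Y.lam) (Real.log 2)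
        rw [← hα] at this
        have hN0 : (0 : ℝ) ≤ N := by positivity
        have hnN : (n : ℝ) ≤ -N := by
          have : n ≤ -(N : ℤ) := by omega
          exact_mod_cast this
        nlinarith
      calc (2 : ℝ) ^ n * |x n - y n| ≤ Real.exp (-(α * N)) * 1 :=
            mul_le_mul h2 hM (abs_nonneg _) (Real.exp_pos _).le
        _ = 1 * Real.exp (-(α * N)) := by ring
        _ ≤ Y.lam⁻¹ * dSigma v w ^ α :=
            mul_le_mul hC hd2 (Real.exp_pos _).le (inv_nonneg.2 Y.lam0.le)

lemma fibre_finite (xh : ℤ → ℝ) : {v : ℤ → Vx ⊕ P |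
    ((∀ n, Y.EE P (v n) (v (n + 1))) ∧ Recurrent v) ∧ Y.prj P v = xh}.Finite := by
  classical
  have h1 : {v : ℤ → Vx ⊕ P | ∃ u : ℤ → Vx, v = (fun n => Sum.inl (u n)) ∧ Y.Rep u xh}.Subsingleton := by
    rintro _ ⟨u, rfl, hu⟩ _ ⟨u', rfl, hu'⟩
    rw [hu.unique hu']
  have h2 : {v : ℤ → Vx ⊕ P | ∃ u : ℤ → P, v = (fun n => Sum.inr (u n)) ∧
      ∀ n, (u n : ℝ) = xh n ∧ Y.f (xh n) = xh (n + 1)}.Subsingleton := by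
    rintro _ ⟨u, rfl, hu⟩ _ ⟨u', rfl, hu'⟩
    have : u = u' := funext fun n => Subtype.ext ((hu n).1.trans (hu' n).1.symm)
    rw [this]
  refine (h1.finite.union h2.finite).subset ?_
  rintro v ⟨⟨hv, _⟩, rfl⟩
  exact rep_prj hv

/-- Codable points of the Markov part. -/
lemma mem_image_of_X {x : ℤ → ℝ} {κ : ℕ} (hx : Y.Orb x) (h : (fun n => Y.c (x n)) ∈ Y.X κ)
    (v1 v2 : Vx) (k1 : v1.κ = κ) (k2 : v2.κ = κ)
    (r1 : {n : ℤ | 0 < n ∧ Y.At v1 (OneDim.sh n (fun n => Y.c (x n)))}.Infinite)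
    (r2 : {n : ℤ | n < 0 ∧ Y.At v2 (OneDim.sh n (fun n => Y.c (x n)))}.Infinite) :
    x ∈ Y.prj P '' {v | (∀ n, Y.EE P (v n) (v (n + 1))) ∧ Recurrent v} := by
  obtain ⟨v, hv⟩ := Rep.exists_of_X hx h
  have hS : Y.RepS P (fun n => Sum.inl (v n)) x := Or.inl ⟨v, rfl, hv⟩
  refine ⟨_, ⟨fun n => hS.path n, ?_⟩, hS.prj_eq⟩
  obtain ⟨_, κ', hX, hA⟩ := hv
  have hk := X_level h hX
  refine ⟨⟨Sum.inl v1, r1.mono ?_⟩, ⟨Sum.inl v2, r2.mono ?_⟩⟩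
  · rintro n ⟨h0, hn⟩
    exact ⟨h0, congrArg Sum.inl ((hA n).2.unique hn (by rw [(hA n).1, k1, hk]))⟩
  · rintro n ⟨h0, hn⟩
    exact ⟨h0, congrArg Sum.inl ((hA n).2.unique hn (by rw [(hA n).1, k2, hk]))⟩

/-- Codable points of the periodic part. -/
lemma mem_image_of_P {x : ℤ → ℝ} (hx : ∀ n, x n ∈ P ∧ Y.f (x n) = x (n + 1)) (p : ℕ) (hp : 0 < p)
    (hper : ∀ n, x (n + p) = x n) :
    x ∈ Y.prj P '' {v | (∀ n, Y.EE P (v n) (v (n + 1))) ∧ Recurrent v} := by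
  have hS : Y.RepS P (fun n => Sum.inr ⟨x n, (hx n).1⟩) x :=
    Or.inr ⟨fun n => ⟨x n, (hx n).1⟩, rfl, fun n => ⟨rfl, (hx n).2⟩⟩
  have hper2 : ∀ k : ℕ, x (p * k) = x 0 := by
    intro k
    induction k with
    | zero => simp
    | succ k ih =>
      rw [← ih, ← hper (p * k)]; congr 1
  have hper3 : ∀ k : ℕ, x (-(p * k)) = x 0 := by
    intro k
    induction k with
    | zero => simp
    | succ k ih =>
      rw [← ih, ← hper]; congr 1; push_cast; ring
  refine ⟨_, ⟨fun n => hS.path n, ?_⟩, hS.prj_eq⟩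
  refine ⟨⟨Sum.inr ⟨x 0, (hx 0).1⟩, ?_⟩, ⟨Sum.inr ⟨x 0, (hx 0).1⟩, ?_⟩⟩
  · refine Set.infinite_of_injective_forall_mem (f := fun k : ℕ => (p : ℤ) * ((k + 1 : ℕ) : ℤ)) ?_ ?_
    · intro a b hab
      have : ((a + 1 : ℕ) : ℤ) = ((b + 1 : ℕ) : ℤ) := mul_left_cancel₀ (by positivity) hab
      omega
    · intro k
      refine ⟨by positivity, ?_⟩
      simp only [hper2]
  · refine Set.infinite_of_injective_forall_mem (f := fun k : ℕ => -((p : ℤ) * ((k + 1 : ℕ) : ℤ))) ?_ ?_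
    · intro a b hab
      have : ((a + 1 : ℕ) : ℤ) = ((b + 1 : ℕ) : ℤ) :=
        mul_left_cancel₀ (by positivity) (neg_injective hab)
      omega
    · intro k
      refine ⟨by simp only [Left.neg_neg_iff]; positivity, ?_⟩
      simp only [hper3]

end Sys

/-! ### The concrete system -/

namespace GoodMap

/-- The part of `M` away from the closure of the singular set. -/
def WW (F : GoodMap) : Set ℝ := {x | x ∈ Mset ∧ x ∉ closure F.S}

open Classical in
/-- A rational element of a set. -/
def pick (s : Set ℝ) : ℚ := if h : ∃ q : ℚ, (q : ℝ) ∈ s then h.choose else 0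

lemma pick_mem {s : Set ℝ} (h : ∃ q : ℚ, (q : ℝ) ∈ s) : (pick s : ℝ) ∈ s := by
  unfold pick
  rw [dif_pos h]
  exact h.choose_spec

open Classical in
/-- Label of the component of `WW`. -/
def lab (F : GoodMap) (x : ℝ) : ℚ := if x ∈ F.WW then pick {y | uIcc x y ⊆ F.WW} else 0

variable {F : GoodMap}

lemma exists_rat_comp {x : ℝ} (hx : x ∈ F.WW) : ∃ q : ℚ, (q : ℝ) ∈ {y | uIcc x y ⊆ F.WW} := by
  obtain ⟨hM, hS⟩ := hx
  have ho : IsOpen (closure F.S)ᶜ := isClosed_closure.isOpen_compl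
  obtain ⟨ε, hε, hb⟩ := Metric.isOpen_iff.1 ho x hS
  simp only [Mset, Set.mem_Icc] at hM
  have hlt : max 0 (x - ε) < min (1 / 2) (x + ε) := by
    rw [max_lt_iff, lt_min_iff, lt_min_iff]
    refine ⟨⟨by norm_num, by linarith⟩, ⟨by linarith, by linarith⟩⟩
  obtain ⟨q, h1, h2⟩ := exists_rat_btwn hlt
  rw [max_lt_iff] at h1
  rw [lt_min_iff] at h2
  refine ⟨q, ?_⟩
  intro w hw
  rw [Set.mem_uIcc] at hw
  refine ⟨?_, ?_⟩
  · simp only [Mset, Set.mem_Icc]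
    rcases hw with hw | hw <;> constructor <;> linarith
  · refine hb ?_
    rw [Metric.mem_ball, Real.dist_eq, abs_lt]
    rcases hw with hw | hw <;> constructor <;> linarith

lemma lab_eq_iff {x y : ℝ} (hx : x ∈ F.WW) (hy : y ∈ F.WW) :
    F.lab x = F.lab y ↔ uIcc x y ⊆ F.WW := by
  unfold lab
  rw [if_pos hx, if_pos hy]
  constructor
  · intro h
    have h1 := pick_mem (exists_rat_comp hx)
    have h2 := pick_mem (exists_rat_comp hy)
    rw [h] at h1
    simp only [Set.mem_setOf_eq] at h1 h2
    refine (Set.uIcc_subset_uIcc_union_uIcc (b := (pick {z | uIcc y z ⊆ F.WW} : ℝ))).trans ?_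
    refine Set.union_subset h1 ?_
    rw [Set.uIcc_comm]; exact h2
  · intro h
    congr 1
    ext z
    simp only [Set.mem_setOf_eq]
    constructor
    · intro hz
      refine (Set.uIcc_subset_uIcc_union_uIcc (b := x)).trans (Set.union_subset ?_ hz)
      rw [Set.uIcc_comm]; exact h
    · intro hz
      exact (Set.uIcc_subset_uIcc_union_uIcc (b := y)).trans (Set.union_subset h hz)

lemma lab_between {x y w : ℝ} (hx : x ∈ F.WW) (hy : y ∈ F.WW) (h : F.lab x = F.lab y)
    (hw : w ∈ uIcc x y) : w ∈ F.WW ∧ F.lab w = F.lab x := by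
  have h1 := (lab_eq_iff hx hy).1 h
  refine ⟨h1 hw, ?_⟩
  rw [lab_eq_iff (h1 hw) hx]
  exact (Set.uIcc_subset_uIcc hw Set.left_mem_uIcc).trans h1

lemma measurableSet_WW : MeasurableSet F.WW :=
  measurableSet_Icc.inter isClosed_closure.measurableSet.compl

lemma measurable_lab : Measurable F.lab := by
  refine measurable_to_countable' (fun q => ?_)
  have h1 : MeasurableSet {x | x ∈ F.WW ∧ F.lab x = q} := by
    refine Set.OrdConnected.measurableSet ?_
    rw [Set.ordConnected_iff]
    rintro x ⟨hx, hxq⟩ y ⟨hy, hyq⟩ hxy w hw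
    have := lab_between (w := w) hx hy (hxq.trans hyq.symm) (by rwa [Set.uIcc_of_le hxy])
    exact ⟨this.1, this.2.trans hxq⟩
  have h2 : F.lab ⁻¹' {q} = {x | x ∈ F.WW ∧ F.lab x = q} ∪ (F.WWᶜ ∩ {_x | (0 : ℚ) = q}) := by
    ext x
    simp only [Set.mem_preimage, Set.mem_singleton_iff, Set.mem_union, Set.mem_setOf_eq,
      Set.mem_inter_iff, Set.mem_compl_iff]
    by_cases hx : x ∈ F.WW
    · simp [hx]
    · simp [hx, lab]
  rw [h2]
  exact h1.union (measurableSet_WW.compl.inter (MeasurableSet.const _))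

lemma WW_deriv {x : ℝ} (hx : x ∈ F.WW) : deriv F.f x ≠ 0 := by
  intro h
  apply hx.2
  apply subset_closure
  by_cases hD : x ∈ F.D
  · exact Or.inr hD
  · exact Or.inl ⟨⟨hx.1, hD⟩, h⟩

lemma WW_diff {x : ℝ} (hx : x ∈ F.WW) : DifferentiableAt ℝ F.f x :=
  differentiableAt_of_deriv_ne_zero (WW_deriv hx)

/-- `f` is strictly monotone on intervals inside `WW`. -/
lemma strict_Icc {u v : ℝ} (huv : u ≤ v) (h : Icc u v ⊆ F.WW) :
    StrictMonoOn F.f (Icc u v) ∨ StrictAntiOn F.f (Icc u v) := by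
  have hc : ContinuousOn F.f (Icc u v) := fun x hx =>
    (WW_diff (h hx)).continuousAt.continuousWithinAt
  have key : ∀ x ∈ Icc u v, ∀ y ∈ Icc u v, x < y → F.f x ≠ F.f y := by
    intro x hx y hy hxy he
    obtain ⟨z, hz, hz0⟩ := exists_deriv_eq_zero hxy
      (hc.mono (Set.Icc_subset_Icc hx.1 hy.2)) he
    exact WW_deriv (h ⟨hx.1.trans hz.1.le, hz.2.le.trans hy.2⟩) hz0
  have hi : InjOn F.f (Icc u v) := by
    intro x hx y hy he
    rcases lt_trichotomy x y with hlt | hlt | hlt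
    · exact absurd he (key x hx y hy hlt)
    · exact hlt
    · exact absurd he.symm (key y hy x hx hlt)
  exact hc.strictMonoOn_of_injOn_Icc' huv hi

variable (F) in
/-- The concrete system with contraction rate `e^{-χ/4}`. -/
def sys (χ : ℝ) (hχ : 0 < χ) : Sys where
  f := F.f
  W := F.WW
  c := F.lab
  lam := Real.exp (-(χ / 4))
  hW := fun _ h => h.1
  lam0 := Real.exp_pos _
  lam1 := by rw [Real.exp_lt_one_iff]; linarith
  hfW := fun x h => F.hmaps x h.1

/-- Two points with the same itinerary of length `k`. -/
def Same (F : GoodMap) (k : ℕ) (y z : ℝ) : Prop :=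
  ∀ j < k, F.f^[j] y ∈ F.WW ∧ F.f^[j] z ∈ F.WW ∧ F.lab (F.f^[j] y) = F.lab (F.f^[j] z)

lemma Same.between {k : ℕ} {y z : ℝ} (hyz : y ≤ z) (h : F.Same k y z) :
    (StrictMonoOn F.f^[k] (Icc y z) ∨ StrictAntiOn F.f^[k] (Icc y z)) ∧
    ∀ w ∈ Icc y z, F.Same k y w := by
  induction k with
  | zero => exact ⟨Or.inl (fun _ _ _ _ h => h), fun w _ j hj => absurd hj (by omega)⟩
  | succ k ih =>
    obtain ⟨h1, h2⟩ := ih (fun j hj => h j (by omega))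
    obtain ⟨hy, hz, hl⟩ := h k (by omega)
    have hmem : ∀ w ∈ Icc y z, F.f^[k] w ∈ uIcc (F.f^[k] y) (F.f^[k] z) := by
      intro w hw
      have hyI : y ∈ Icc y z := ⟨le_rfl, hyz⟩
      have hzI : z ∈ Icc y z := ⟨hyz, le_rfl⟩
      rcases h1 with h1 | h1
      · exact Set.Icc_subset_uIcc ⟨h1.monotoneOn hyI hw hw.1, h1.monotoneOn hw hzI hw.2⟩
      · exact Set.Icc_subset_uIcc' ⟨h1.antitoneOn hw hzI hw.2, h1.antitoneOn hyI hw hw.1⟩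
    have hsub := (lab_eq_iff hy hz).1 hl
    refine ⟨?_, ?_⟩
    · have hs : StrictMonoOn F.f (uIcc (F.f^[k] y) (F.f^[k] z)) ∨
          StrictAntiOn F.f (uIcc (F.f^[k] y) (F.f^[k] z)) := strict_Icc inf_le_sup hsub
      rw [Function.iterate_succ']
      rcases hs with hs | hs <;> rcases h1 with h1 | h1
      · exact Or.inl (hs.comp h1 hmem)
      · exact Or.inr (hs.comp_strictAntiOn h1 hmem)
      · exact Or.inr (hs.comp_strictMonoOn h1 hmem)
      · exact Or.inl (hs.comp h1 hmem)
    · intro w hw j hj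
      by_cases hjk : j < k
      · exact h2 w hw j hjk
      · obtain rfl : j = k := by omega
        have := lab_between hy hz hl (hmem w hw)
        exact ⟨hy, this.1, this.2.symm⟩

lemma Same.symm {k : ℕ} {y z : ℝ} (h : F.Same k y z) : F.Same k z y :=
  fun j hj => ⟨(h j hj).2.1, (h j hj).1, (h j hj).2.2.symm⟩

lemma Same.trans {k : ℕ} {y z w : ℝ} (h : F.Same k y z) (h' : F.Same k z w) : F.Same k y w :=
  fun j hj => ⟨(h j hj).1, (h' j hj).2.1, (h j hj).2.2.trans (h' j hj).2.2⟩

lemma inj_of_lab {y z : ℝ} (hy : y ∈ F.WW) (hz : z ∈ F.WW) (hl : F.lab y = F.lab z)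
    (h : F.f y = F.f z) : y = z := by
  have hs : StrictMonoOn F.f (uIcc y z) ∨ StrictAntiOn F.f (uIcc y z) :=
    strict_Icc inf_le_sup ((lab_eq_iff hy hz).1 hl)
  rcases hs with hs | hs
  · exact hs.injOn Set.left_mem_uIcc Set.right_mem_uIcc h
  · exact hs.injOn Set.left_mem_uIcc Set.right_mem_uIcc h

lemma dS_pos (hA : F.SatA) {x : ℝ} (hM : x ∈ Mset) (hx : x ∉ F.S) (hfx : F.f x ∉ F.S) :
    0 < F.dS x := by
  obtain ⟨⟨hr, _⟩, _, ⟨h2, _⟩, _⟩ := hA x hM hx hfx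
  have hd0 : 0 ≤ F.dS x := Metric.infDist_nonneg
  rcases hd0.lt_or_eq with h | h
  · exact h
  exfalso
  have ha : F.a ≠ 0 := by have := F.ha; positivity
  have hr0 : 0 < F.r x := by
    refine lt_of_le_of_lt (le_min ?_ ?_) hr
    · exact Real.rpow_nonneg hd0 _
    · exact Real.rpow_nonneg Metric.infDist_nonneg _
  have := (h2 x (Metric.mem_ball_self (by linarith))).2
  rw [← h, Real.zero_rpow (by simpa using ha)] at this
  have h0 : deriv F.f x = 0 := by
    have := abs_nonneg (deriv F.f x)
    exact abs_eq_zero.1 (by linarith)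
  by_cases hD : x ∈ F.D
  · exact hx (Or.inr hD)
  · exact hx (Or.inl ⟨⟨hM, hD⟩, h0⟩)

lemma mem_WW (hA : F.SatA) {x : ℝ} (hM : x ∈ Mset) (hx : x ∉ F.S) (hfx : F.f x ∉ F.S) :
    x ∈ F.WW := by
  refine ⟨hM, fun h => ?_⟩
  have := dS_pos hA hM hx hfx
  have h0 : F.dS x = 0 := Metric.infDist_zero_of_mem_closure h
  linarith

lemma dS_le_one {x : ℝ} (hM : x ∈ Mset) : F.dS x ≤ 1 := by
  rcases F.S.eq_empty_or_nonempty with h | ⟨y, hy⟩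
  · simp [dS, h]
  · refine (Metric.infDist_le_dist_of_mem hy).trans ?_
    have hyM : y ∈ Mset := by
      rcases hy with hy | hy
      · exact hy.1.1
      · exact F.hD hy
    simp only [Mset, Set.mem_Icc] at hM hyM
    rw [Real.dist_eq, abs_le]; constructor <;> linarith

end GoodMap

/-! ### Good times from hyperbolicity -/

namespace GoodMap

variable {F : GoodMap}

/-- Composition of inverse branches along the backward orbit `u`. -/
def GG (F : GoodMap) (u : ℕ → ℝ) : ℕ → ℝ → ℝ
  | 0 => id
  | m + 1 => fun y => F.g (u (m + 1)) (GG F u m y)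

/-- One-step estimate for the inverse branch. -/
lemma branch_step (hA : F.SatA) {x ρ η : ℝ} (hM : x ∈ Mset) (hx : x ∉ F.S) (hfx : F.f x ∉ F.S)
    (hρ : ρ ≤ min (F.dS x ^ F.a) (F.dS (F.f x) ^ F.a))
    (hη : F.K * ρ ^ F.β ≤ η * F.dS x ^ F.a) (hη0 : 0 ≤ η) (hρ0 : 0 < ρ) :
    (∀ y ∈ Metric.ball (F.f x) ρ, F.f (F.g x y) = y) ∧ F.g x (F.f x) = x ∧
    ∀ y ∈ Metric.ball (F.f x) ρ, ∀ z ∈ Metric.ball (F.f x) ρ,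
      |F.g x y - F.g x z| ≤ (|deriv F.f x|⁻¹ * Real.exp η) * |y - z| := by
  obtain ⟨⟨hr, _⟩, ⟨_, hfd, hgx, hfg, _, hgd⟩, ⟨_, h2⟩, ⟨_, h3⟩⟩ := hA x hM hx hfx
  have hsub : Metric.ball (F.f x) ρ ⊆ Metric.ball (F.f x) (2 * F.r x) :=
    Metric.ball_subset_ball (by linarith)
  refine ⟨fun y hy => hfg y (hsub hy), hgx, ?_⟩
  have hc : F.f x ∈ Metric.ball (F.f x) ρ := Metric.mem_ball_self hρ0
  have hder : deriv F.f x * deriv (F.g x) (F.f x) = 1 := by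
    have h1 : HasDerivAt (F.g x) (deriv (F.g x) (F.f x)) (F.f x) := (hgd _ (hsub hc)).hasDerivAt
    have h4 : HasDerivAt F.f (deriv F.f x) (F.g x (F.f x)) := by
      rw [hgx]
      exact (hfd x (Metric.mem_ball_self (by linarith))).hasDerivAt
    have h5 := h4.comp (F.f x) h1
    have h6 : HasDerivAt (F.f ∘ F.g x) 1 (F.f x) := by
      refine (hasDerivAt_id (F.f x)).congr_of_eventuallyEq ?_
      filter_upwards [Metric.ball_mem_nhds (F.f x) (show 0 < 2 * F.r x by linarith)] with z hz
      exact hfg z hz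
    exact h5.unique h6
  have hg' : |deriv (F.g x) (F.f x)| = |deriv F.f x|⁻¹ := by
    rw [← abs_inv, eq_inv_of_mul_eq_one_right hder]
  have hbd : ∀ w ∈ Metric.ball (F.f x) ρ, ‖deriv (F.g x) w‖ ≤ |deriv F.f x|⁻¹ * Real.exp η := by
    intro w hw
    rw [Real.norm_eq_abs]
    have e1 := h3 w (hsub hw) _ (hsub hc)
    have e2 : |w - F.f x| ^ F.β ≤ ρ ^ F.β := by
      refine Real.rpow_le_rpow (abs_nonneg _) ?_ F.hβ0.le
      rw [Metric.mem_ball, Real.dist_eq] at hw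
      exact hw.le
    have e3 : F.dS x ^ F.a ≤ |deriv (F.g x) (F.f x)| := (h2 _ (hsub hc)).1
    have e4 : |deriv (F.g x) w| ≤ |deriv (F.g x) (F.f x)| + F.K * ρ ^ F.β := by
      have a1 := abs_sub_abs_le_abs_sub (deriv (F.g x) w) (deriv (F.g x) (F.f x))
      have a2 := mul_le_mul_of_nonneg_left e2 (show 0 ≤ F.K by have := F.hK; linarith)
      linarith
    have e5 := mul_le_mul_of_nonneg_left e3 hη0
    have e6 : 1 + η ≤ Real.exp η := by have := Real.add_one_le_exp η; linarith
    rw [← hg']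
    have e7 := mul_le_mul_of_nonneg_left e6 (abs_nonneg (deriv (F.g x) (F.f x)))
    nlinarith
  intro y hy z hz
  have := Convex.norm_image_sub_le_of_norm_deriv_le (f := F.g x) (s := Metric.ball (F.f x) ρ)
    (fun w hw => hgd w (hsub hw)) hbd (convex_ball _ _) hz hy
  simpa [Real.norm_eq_abs] using this

/-- Main deterministic statement: a hyperbolic time is a good time. -/
lemma good_of_hyp (hA : F.SatA) {χ : ℝ} (hχ : 0 < χ) {x : ℤ → ℝ} (hx : inMhat F.f x)
    (hS : ∀ n, x n ∉ F.S)
    (hrec : ∀ m : ℕ, 0 ≤ ∑ j ∈ Finset.range m, (Real.log |deriv F.f (x (-(j : ℤ) - 1))| - χ / 2))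
    (htemp : ∃ c > 0, ∀ j : ℕ, c * Real.exp (-(F.β * χ / (4 * F.a) * j)) ≤ F.dS (x (-(j : ℤ))))
    (hbd : ∃ δ > 0, ∀ N : ℕ, ∃ m : ℕ, N ≤ m ∧ δ ≤ x (-(m : ℤ)) ∧ x (-(m : ℤ)) ≤ 1 / 2 - δ)
    (hshr : ∀ r > 0, ∃ k : ℕ,
      closure ((F.sys χ hχ).Z (fun n => F.lab (x n)) 0 k) ⊆ Metric.ball (x 0) r) :
    ∃ κ, (F.sys χ hχ).Good (fun n => F.lab (x n)) 0 κ := by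
  obtain ⟨c0, hc0, htemp⟩ := htemp
  have hβ := F.hβ0
  have hβ1 := F.hβ1
  have ha := F.ha
  have ha0 : 0 < F.a := by linarith
  have hK := F.hK
  set ε := F.β * χ / (4 * F.a) with hε
  have hεa : ε * F.a = F.β * χ / 4 := by rw [hε]; field_simp
  have hε0 : 0 < ε := by rw [hε]; positivity
  have hεχ : ε ≤ χ / 4 := by
    have h1 : ε * 1 ≤ ε * F.a := mul_le_mul_of_nonneg_left ha.le hε0.le
    nlinarith
  set u : ℕ → ℝ := fun m => x (-(m : ℤ)) with hu
  have huM : ∀ m, u m ∈ Mset := fun m => hx.1 _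
  have huS : ∀ m, u m ∉ F.S := fun m => hS _
  have hfu : ∀ m, F.f (u (m + 1)) = u m := fun m => by
    simp only [hu]
    rw [← hx.2 (-(m : ℤ))]
    congr 2
    push_cast; ring
  have hfx : ∀ n, F.f (x n) ∉ F.S := fun n => by
    have := hx.2 (n + 1)
    rw [add_sub_cancel_right] at this
    rw [this]; exact hS _
  have hxW : ∀ n, x n ∈ F.WW := fun n => mem_WW hA (hx.1 n) (hS n) (hfx n)
  -- constants
  set c := min c0 1 with hc
  have hc1 : 0 < c := lt_min hc0 one_pos
  have hcle : c ≤ 1 := min_le_right _ _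
  have hd : ∀ m : ℕ, c * Real.exp (-(ε * m)) ≤ F.dS (u m) := fun m =>
    (mul_le_mul_of_nonneg_right (min_le_left _ _) (Real.exp_pos _).le).trans (htemp m)
  have hda : ∀ m : ℕ, c ^ F.a * Real.exp (-(F.β * χ / 4 * m)) ≤ F.dS (u m) ^ F.a := fun m => by
    have := Real.rpow_le_rpow (by positivity) (hd m) ha0.le
    rw [Real.mul_rpow hc1.le (Real.exp_pos _).le, ← Real.exp_mul] at this
    rwa [show -(ε * m) * F.a = -(F.β * χ / 4 * m) by rw [← hεa]; ring] at this
  have hca0 : 0 < c ^ F.a := Real.rpow_pos_of_pos hc1 _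
  have hca1 : c ^ F.a ≤ c := by
    have := Real.rpow_le_rpow_of_exponent_ge hc1 hcle ha.le
    rwa [Real.rpow_one] at this
  -- radius
  obtain ⟨r, hr0, hr1, hr2⟩ : ∃ r > 0, r * Real.exp (χ / 4) ≤ c ^ F.a ∧
      F.K * r ^ F.β * Real.exp (F.β * χ / 4) ≤ χ / 4 * c ^ F.a := by
    have t1 : Tendsto (fun r : ℝ => r * Real.exp (χ / 4)) (𝓝 0) (𝓝 (0 * Real.exp (χ / 4))) :=
      tendsto_id.mul_const _
    have t2 : Tendsto (fun r : ℝ => F.K * r ^ F.β * Real.exp (F.β * χ / 4)) (𝓝 0)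
        (𝓝 (F.K * (0 : ℝ) ^ F.β * Real.exp (F.β * χ / 4))) :=
      (((Real.continuousAt_rpow_const 0 F.β (Or.inr hβ.le)).tendsto).const_mul _).mul_const _
    rw [Real.zero_rpow hβ.ne', mul_zero, zero_mul] at t2
    rw [zero_mul] at t1
    have e1 := t1.eventually (Iic_mem_nhds hca0)
    have e2 := t2.eventually (Iic_mem_nhds (show 0 < χ / 4 * c ^ F.a by positivity))
    have e3 : ∀ᶠ r in 𝓝[>] (0 : ℝ), r * Real.exp (χ / 4) ∈ Iic (c ^ F.a) ∧
      F.K * r ^ F.β * Real.exp (F.β * χ / 4) ∈ Iic (χ / 4 * c ^ F.a) ∧ r ∈ Ioi (0 : ℝ) :=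
      (e1.filter_mono nhdsWithin_le_nhds).and ((e2.filter_mono nhdsWithin_le_nhds).and self_mem_nhdsWithin)
    obtain ⟨r, h1, h2, h3⟩ := e3.exists
    exact ⟨r, h3, h1, h2⟩
  set lam := Real.exp (-(χ / 4)) with hlam
  have hlam0 : 0 < lam := Real.exp_pos _
  have hlam1 : lam < 1 := by rw [hlam, Real.exp_lt_one_iff]; linarith
  have hlamp : ∀ m : ℕ, lam ^ m = Real.exp (-(χ / 4 * m)) := fun m => by
    rw [hlam, ← Real.exp_nat_mul]; congr 1; ring
  -- the one-step estimate along the orbit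
  have step : ∀ m : ℕ, (∀ y ∈ Metric.ball (u m) (r * lam ^ m), F.f (F.g (u (m + 1)) y) = y) ∧
      F.g (u (m + 1)) (u m) = u (m + 1) ∧
      ∀ y ∈ Metric.ball (u m) (r * lam ^ m), ∀ z ∈ Metric.ball (u m) (r * lam ^ m),
      |F.g (u (m + 1)) y - F.g (u (m + 1)) z| ≤
        (|deriv F.f (u (m + 1))|⁻¹ * Real.exp (χ / 4)) * |y - z| := by
    intro m
    have hρ0 : 0 < r * lam ^ m := by positivity
    have hm0 : (0 : ℝ) ≤ m := by positivity
    have hlow : r * lam ^ m ≤ c ^ F.a * Real.exp (-(F.β * χ / 4 * (m + 1 : ℕ))) := by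
      rw [hlamp]
      have e1 : Real.exp (-(χ / 4 * m)) = Real.exp (χ / 4) * Real.exp (-(χ / 4 * (m + 1 : ℕ))) := by
        rw [← Real.exp_add]; congr 1; push_cast; ring
      rw [e1, ← mul_assoc]
      refine mul_le_mul hr1 (Real.exp_le_exp.2 ?_) (Real.exp_pos _).le hca0.le
      have : F.β * χ / 4 ≤ χ / 4 := by nlinarith
      have := mul_le_mul_of_nonneg_right this (show (0 : ℝ) ≤ (m + 1 : ℕ) by positivity)
      linarith
    have := branch_step hA (x := u (m + 1)) (ρ := r * lam ^ m) (η := χ / 4) (huM _) (huS _)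
      (by rw [hfu]; exact huS _) ?_ ?_ (by linarith) hρ0
    · rw [hfu] at this; exact this
    · rw [hfu]
      refine le_min (hlow.trans (hda _)) (hlow.trans (le_trans ?_ (hda m)))
      refine mul_le_mul_of_nonneg_left (Real.exp_le_exp.2 ?_) hca0.le
      push_cast
      nlinarith
    · refine le_trans ?_ (mul_le_mul_of_nonneg_left (hda (m + 1)) (by linarith))
      have e1 : (r * lam ^ m) ^ F.β = r ^ F.β * Real.exp (-(F.β * χ / 4 * m)) := by
        rw [Real.mul_rpow hr0.le (by positivity), hlamp, ← Real.exp_mul]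
        congr 2; ring
      have e2 : Real.exp (-(F.β * χ / 4 * m)) =
          Real.exp (F.β * χ / 4) * Real.exp (-(F.β * χ / 4 * (m + 1 : ℕ))) := by
        rw [← Real.exp_add]; congr 1; push_cast; ring
      rw [e1, e2]
      have := mul_le_mul_of_nonneg_right hr2 (Real.exp_pos (-(F.β * χ / 4 * (m + 1 : ℕ)))).le
      calc _ = F.K * r ^ F.β * Real.exp (F.β * χ / 4) *
            Real.exp (-(F.β * χ / 4 * (m + 1 : ℕ))) := by ring
        _ ≤ _ := this
        _ = _ := by ring
  -- derivative products
  set Q : ℕ → ℝ := fun m => ∏ j ∈ Finset.range m, (|deriv F.f (u (j + 1))|⁻¹ * Real.exp (χ / 4))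
    with hQ
  have hQ0 : ∀ m, 0 ≤ Q m := fun m => Finset.prod_nonneg (fun j _ => by positivity)
  have hder : ∀ m, 0 < |deriv F.f (u m)| := fun m => abs_pos.2 (WW_deriv (hxW _))
  have hQle : ∀ m, Q m ≤ lam ^ m := by
    intro m
    have e1 : Q m = Real.exp (-(∑ j ∈ Finset.range m,
        (Real.log |deriv F.f (x (-(j : ℤ) - 1))| - χ / 2)) - χ / 4 * m) := by
      have : ∀ m, Q m = Real.exp (∑ j ∈ Finset.range m,
          (-(Real.log |deriv F.f (x (-(j : ℤ) - 1))| - χ / 2) - χ / 4)) := by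
        intro m
        simp only [hQ]
        rw [Real.exp_sum]
        refine Finset.prod_congr rfl (fun j _ => ?_)
        have hux : u (j + 1) = x (-(j : ℤ) - 1) := by
          simp only [hu]; congr 1; push_cast; ring
        rw [← hux, show -(Real.log |deriv F.f (u (j + 1))| - χ / 2) - χ / 4 =
          -Real.log |deriv F.f (u (j + 1))| + χ / 4 by ring, Real.exp_add, Real.exp_neg,
          Real.exp_log (hder _)]
      rw [this m]
      congr 1
      rw [Finset.sum_sub_distrib, Finset.sum_neg_distrib]
      simp; ring
    rw [e1, hlamp]
    refine Real.exp_le_exp.2 ?_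
    have := hrec m
    linarith
  have Gu : ∀ m, F.GG u m (u 0) = u m := by
    intro m
    induction m with
    | zero => rfl
    | succ m ih => simp only [GG]; rw [ih]; exact (step m).2.1
  have Gc : ∀ m, ∀ y ∈ Metric.ball (u 0) r, ∀ z ∈ Metric.ball (u 0) r,
      |F.GG u m y - F.GG u m z| ≤ Q m * |y - z| := by
    intro m
    induction m with
    | zero => intro y _ z _; simp [GG, hQ]
    | succ m ih =>
      have hin : ∀ y ∈ Metric.ball (u 0) r, F.GG u m y ∈ Metric.ball (u m) (r * lam ^ m) := by
        intro y hy
        have := ih y hy (u 0) (Metric.mem_ball_self hr0)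
        rw [Gu] at this
        rw [Metric.mem_ball, Real.dist_eq] at hy ⊢
        have h2 := mul_le_mul_of_nonneg_right (hQle m) (abs_nonneg (y - u 0))
        have h3 : lam ^ m * |y - u 0| < lam ^ m * r :=
          mul_lt_mul_of_pos_left hy (by positivity)
        linarith
      intro y hy z hz
      have h1 := (step m).2.2 _ (hin y hy) _ (hin z hz)
      have h2 := mul_le_mul_of_nonneg_left (ih y hy z hz)
        (show 0 ≤ |deriv F.f (u (m + 1))|⁻¹ * Real.exp (χ / 4) by positivity)
      have h3 : Q (m + 1) = Q m * (|deriv F.f (u (m + 1))|⁻¹ * Real.exp (χ / 4)) := by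
        simp only [hQ]; rw [Finset.prod_range_succ]
      rw [h3]
      simp only [GG]
      calc _ ≤ _ := h1
        _ ≤ _ := h2
        _ = _ := by ring
  have Gl : ∀ m, ∀ y ∈ Metric.ball (u 0) r, ∀ z ∈ Metric.ball (u 0) r,
      |F.GG u m y - F.GG u m z| ≤ lam ^ m * |y - z| := fun m y hy z hz =>
    (Gc m y hy z hz).trans (mul_le_mul_of_nonneg_right (hQle m) (abs_nonneg _))
  have Gin : ∀ m, ∀ y ∈ Metric.ball (u 0) r, |F.GG u m y - u m| < r * lam ^ m := by
    intro m y hy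
    have := Gl m y hy (u 0) (Metric.mem_ball_self hr0)
    rw [Gu] at this
    rw [Metric.mem_ball, Real.dist_eq] at hy
    have h3 : lam ^ m * |y - u 0| < lam ^ m * r := mul_lt_mul_of_pos_left hy (by positivity)
    linarith
  have Gf : ∀ m, ∀ y ∈ Metric.ball (u 0) r, F.f (F.GG u (m + 1) y) = F.GG u m y := fun m y hy =>
    (step m).1 _ (by rw [Metric.mem_ball, Real.dist_eq]; exact Gin m y hy)
  -- the pulled back points stay in `M`
  have GM : ∀ m, ∀ y ∈ Metric.ball (u 0) r, F.GG u m y ∈ Mset := by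
    intro m y hy
    by_contra hcon
    have hall : ∀ k, F.GG u (m + k) y ∉ Mset := by
      intro k
      induction k with
      | zero => exact hcon
      | succ k ih =>
        intro h
        apply ih
        rw [← Gf (m + k) y hy]
        exact F.hmaps _ h
    obtain ⟨δ, hδ, hδ2⟩ := hbd
    have ht : Tendsto (fun k : ℕ => r * lam ^ k) atTop (𝓝 (r * 0)) :=
      (tendsto_pow_atTop_nhds_zero_of_lt_one hlam0.le hlam1).const_mul _
    rw [mul_zero] at ht
    obtain ⟨N, hN⟩ := Filter.eventually_atTop.1 (ht.eventually (gt_mem_nhds hδ))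
    obtain ⟨k, hk, h1, h2⟩ := hδ2 (max N m)
    obtain ⟨i, rfl⟩ := Nat.exists_eq_add_of_le ((le_max_right N m).trans hk)
    apply hall i
    have h3 := Gin (m + i) y hy
    have h4 := hN (m + i) ((le_max_left N m).trans hk)
    have h5 := abs_lt.1 (h3.trans h4)
    change δ ≤ u (m + i) at h1
    change u (m + i) ≤ 1 / 2 - δ at h2
    simp only [Mset, Set.mem_Icc]
    constructor <;> linarith [h5.1, h5.2]
  have GW : ∀ m, ∀ y ∈ Metric.ball (u 0) r, F.GG u m y ∈ F.WW ∧ F.lab (F.GG u m y) = F.lab (u m) := by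
    intro m y hy
    have hsub : uIcc (u m) (F.GG u m y) ⊆ F.WW := by
      intro w hw
      have hwd : |w - u m| < r * lam ^ m := by
        refine lt_of_le_of_lt ?_ (Gin m y hy)
        exact Set.abs_sub_left_of_mem_uIcc hw
      refine ⟨?_, fun hcl => ?_⟩
      · have h1 := huM m
        have h2 := GM m y hy
        exact Set.uIcc_subset_Icc h1 h2 hw
      · have h1 : F.dS (u m) ≤ F.dS w + dist (u m) w := Metric.infDist_le_infDist_add_dist
        have h2 : F.dS w = 0 := Metric.infDist_zero_of_mem_closure hcl
        rw [h2, zero_add, dist_comm, Real.dist_eq] at h1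
        have h3 := hd m
        have h4 : r * lam ^ m ≤ c * Real.exp (-(ε * m)) := by
          rw [hlamp]
          refine mul_le_mul ?_ (Real.exp_le_exp.2 ?_) (Real.exp_pos _).le hc1.le
          · have : 1 ≤ Real.exp (χ / 4) := by rw [Real.one_le_exp_iff]; linarith
            nlinarith
          · have := mul_le_mul_of_nonneg_right hεχ (show (0 : ℝ) ≤ m by positivity)
            linarith
        linarith
    have hm := hsub Set.right_mem_uIcc
    refine ⟨hm, ?_⟩
    rw [lab_eq_iff hm (hxW _), Set.uIcc_comm]
    exact hsub
  have Git : ∀ j m, ∀ y ∈ Metric.ball (u 0) r, F.f^[j] (F.GG u (m + j) y) = F.GG u m y := by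
    intro j
    induction j with
    | zero => intro m y _; rfl
    | succ j ih =>
      intro m y hy
      rw [Function.iterate_succ_apply, ← add_assoc, Gf _ y hy, ih m y hy]
  -- conclusion
  obtain ⟨κ, hκ⟩ := hshr r hr0
  refine ⟨κ, fun m => ⟨fun q hq => ⟨F.GG u m q, ?_, ?_⟩, ?_⟩⟩
  · intro j hj
    obtain ⟨i, rfl⟩ := Nat.exists_eq_add_of_le' hj.le
    change F.f^[j] (F.GG u (i + j) q) ∈ F.WW ∧ F.lab (F.f^[j] (F.GG u (i + j) q)) = _
    rw [Git j i q (hκ hq)]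
    refine ⟨(GW i q (hκ hq)).1, ?_⟩
    rw [(GW i q (hκ hq)).2]
    simp only [hu]
    congr 2
    push_cast; ring
  · have := Git m 0 q (hκ hq)
    rw [zero_add] at this
    exact this
  · intro y hy z hz hfy hfz
    have hpull : ∀ y ∈ (F.sys χ hχ).Z (fun n => F.lab (x n)) (0 - m) m,
        F.f^[m] y ∈ Metric.ball (u 0) r → y = F.GG u m (F.f^[m] y) := by
      intro y hy hb
      have : ∀ i j, i + j = m → F.f^[j] y = F.GG u i (F.f^[m] y) := by
        intro i
        induction i with
        | zero => intro j hj; rw [show j = m by omega]; rfl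
        | succ i ih =>
          intro j hj
          have h1 := ih (j + 1) (by omega)
          rw [Function.iterate_succ_apply', ← Gf i _ hb] at h1
          have h2 := hy j (by omega)
          have h3 := GW (i + 1) _ hb
          refine inj_of_lab h2.1 h3.1 ?_ h1
          rw [h3.2]
          refine h2.2.trans ?_
          simp only [hu]
          congr 2
          push_cast
          omega
      exact this m 0 (by omega)
    have e1 := hpull y hy (hκ hfy)
    have e2 := hpull z hz (hκ hfz)
    have := Gl m _ (hκ hfy) _ (hκ hfz)
    change |F.GG u m (F.f^[m] y) - F.GG u m (F.f^[m] z)| ≤ lam ^ m * |F.f^[m] y - F.f^[m] z| at this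
    rw [← e1, ← e2] at this
    exact this

end GoodMap

/-! ### Measure-theoretic generalities on the two-sided shift -/

lemma fhatI_fhatI (k l : ℤ) (x : ℤ → ℝ) : fhatI k (fhatI l x) = fhatI (k + l) x := by
  funext n
  simp only [fhatI]
  congr 1
  ring

lemma fhatI_zero (x : ℤ → ℝ) : fhatI 0 x = x := by
  funext n
  simp [fhatI]

lemma fhatI_iter (k : ℤ) (n : ℕ) (x : ℤ → ℝ) : (fhatI k)^[n] x = fhatI (n * k) x := by
  induction n with
  | zero => simp [fhatI_zero]
  | succ n ih =>
    rw [Function.iterate_succ_apply', ih, fhatI_fhatI]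
    congr 1
    push_cast
    ring

lemma measurable_fhatI (k : ℤ) : Measurable (fhatI k) :=
  measurable_pi_lambda _ (fun n => measurable_pi_apply (n + k))

lemma mp_fhatI {ν : Measure (ℤ → ℝ)} (h : ν.map fhat = ν) (k : ℤ) :
    MeasurePreserving (fhatI k) ν ν := by
  refine ⟨measurable_fhatI k, ?_⟩
  have h1 : ν.map (fhatI 1) = ν := h
  have hn : ∀ n : ℕ, ν.map (fhatI n) = ν := by
    intro n
    induction n with
    | zero =>
      have : fhatI ((0 : ℕ) : ℤ) = id := by
        funext x
        simpa using fhatI_zero x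
      rw [this, Measure.map_id]
    | succ n ih =>
      have : fhatI ((n + 1 : ℕ) : ℤ) = fhatI 1 ∘ fhatI n := by
        funext x
        rw [Function.comp_apply, fhatI_fhatI]
        congr 1
        push_cast
        ring
      rw [this, ← Measure.map_map (measurable_fhatI 1) (measurable_fhatI n), ih, h1]
  obtain ⟨n, rfl | rfl⟩ := k.eq_nat_or_neg
  · exact hn n
  · conv_lhs => rw [← hn n]
    rw [Measure.map_map (measurable_fhatI _) (measurable_fhatI _)]
    have : fhatI (-(n : ℤ)) ∘ fhatI n = id := by
      funext x
      rw [Function.comp_apply, fhatI_fhatI]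
      simpa using fhatI_zero x
    rw [this, Measure.map_id]

section Meas

variable {ν : Measure (ℤ → ℝ)} [IsProbabilityMeasure ν]

lemma ae_shift (hν : ν.map fhat = ν) {p : (ℤ → ℝ) → Prop} (h : ∀ᵐ x ∂ν, p x) : ∀ᵐ x ∂ν, ∀ k, p (fhatI k x) := by
  rw [ae_all_iff]
  intro k
  exact (mp_fhatI hν k).quasiMeasurePreserving.ae h

lemma ae_rec_pow (hν : ν.map fhat = ν) {A : Set (ℤ → ℝ)} (hA : NullMeasurableSet A ν) (k : ℤ) :
    ∀ᵐ x ∂ν, x ∈ A → ∀ N : ℕ, ∃ n : ℕ, N ≤ n ∧ fhatI (n * k) x ∈ A := by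
  have hc := (mp_fhatI hν k).conservative
  filter_upwards [hc.ae_mem_imp_frequently_image_mem hA] with x hx hxA N
  obtain ⟨n, hn, h⟩ := (Filter.frequently_atTop.1 (hx hxA)) N
  exact ⟨n, hn, by rwa [fhatI_iter] at h⟩

lemma ae_rec (hν : ν.map fhat = ν) {A : Set (ℤ → ℝ)} (hA : NullMeasurableSet A ν) :
    ∀ᵐ x ∂ν, x ∈ A → (∀ N : ℤ, ∃ n : ℤ, N ≤ n ∧ fhatI n x ∈ A) ∧
      ∀ N : ℤ, ∃ n : ℤ, n ≤ N ∧ fhatI n x ∈ A := by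
  filter_upwards [ae_rec_pow hν hA 1, ae_rec_pow hν hA (-1)] with x h1 h2 hx
  constructor
  · intro N
    obtain ⟨n, hn, h⟩ := h1 hx N.toNat
    exact ⟨n * 1, by omega, h⟩
  · intro N
    obtain ⟨n, hn, h⟩ := h2 hx (-N).toNat
    exact ⟨n * (-1), by omega, h⟩

/-- Recurrence at all shifted times. -/
lemma ae_rec_all (hν : ν.map fhat = ν) {A : Set (ℤ → ℝ)} (hA : NullMeasurableSet A ν) :
    ∀ᵐ x ∂ν, ∀ k : ℤ, fhatI k x ∈ A → (∀ N : ℤ, ∃ n : ℤ, N ≤ n ∧ fhatI n x ∈ A) ∧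
      ∀ N : ℤ, ∃ n : ℤ, n ≤ N ∧ fhatI n x ∈ A := by
  filter_upwards [ae_shift hν (ae_rec hν hA)] with x hx k hk
  obtain ⟨h1, h2⟩ := hx k hk
  constructor
  · intro N
    obtain ⟨n, hn, h⟩ := h1 (N - k)
    exact ⟨n + k, by omega, by rwa [fhatI_fhatI] at h⟩
  · intro N
    obtain ⟨n, hn, h⟩ := h2 (N - k)
    exact ⟨n + k, by omega, by rwa [fhatI_fhatI] at h⟩

lemma ae_tempered (hν : ν.map fhat = ν) {φ : (ℤ → ℝ) → ℝ} (hi : Integrable φ ν) {ε : ℝ} (hε : 0 < ε) :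
    ∀ᵐ x ∂ν, ∀ᶠ j : ℕ in atTop, |φ (fhatI (-(j : ℤ)) x)| ≤ ε * j := by
  have key : ∑' j : ℕ, ν {x | |φ x| / ε ∈ Ioi (j : ℝ)} < ⊤ := by
    let _ : MeasureSpace (ℤ → ℝ) := ⟨ν⟩
    have : IsProbabilityMeasure (volume : Measure (ℤ → ℝ)) :=
      inferInstanceAs (IsProbabilityMeasure ν)
    exact ProbabilityTheory.tsum_prob_mem_Ioi_lt_top (X := fun x => |φ x| / ε)
      (hi.abs.div_const ε) (fun x => div_nonneg (abs_nonneg _) hε.le)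
  have hnm : ∀ j : ℕ, NullMeasurableSet {x | |φ x| / ε ∈ Ioi (j : ℝ)} ν := by
    intro j
    have : AEMeasurable (fun x => |φ x| / ε) ν := (hi.abs.div_const ε).aemeasurable
    exact this.nullMeasurable measurableSet_Ioi
  have key2 : ∑' j : ℕ, ν (fhatI (-(j : ℤ)) ⁻¹' {x | |φ x| / ε ∈ Ioi (j : ℝ)}) ≠ ⊤ := by
    have : ∀ j : ℕ, ν (fhatI (-(j : ℤ)) ⁻¹' {x | |φ x| / ε ∈ Ioi (j : ℝ)}) =
        ν {x | |φ x| / ε ∈ Ioi (j : ℝ)} :=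
      fun j => (mp_fhatI hν _).measure_preimage (hnm j)
    simp_rw [this]
    exact key.ne
  filter_upwards [ae_eventually_notMem key2] with x hx
  filter_upwards [hx] with j hj
  simp only [mem_preimage, mem_ofPred_eq, mem_Ioi, not_lt] at hj
  rw [div_le_iff₀ hε] at hj
  linarith

end Meas

lemma meas_ex {α ι : Type*} [MeasurableSpace α] [Countable ι] {p : ι → α → Prop}
    (h : ∀ i, MeasurableSet {x | p i x}) : MeasurableSet {x | ∃ i, p i x} := by
  have : {x | ∃ i, p i x} = ⋃ i, {x | p i x} := by
    ext x
    simp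
  rw [this]
  exact MeasurableSet.iUnion h

lemma meas_all {α ι : Type*} [MeasurableSpace α] [Countable ι] {p : ι → α → Prop}
    (h : ∀ i, MeasurableSet {x | p i x}) : MeasurableSet {x | ∀ i, p i x} := by
  have : {x | ∀ i, p i x} = ⋂ i, {x | p i x} := by
    ext x
    simp
  rw [this]
  exact MeasurableSet.iInter h

lemma meas_and {α : Type*} [MeasurableSpace α] {p q : α → Prop}
    (h : MeasurableSet {x | p x}) (h' : MeasurableSet {x | q x}) :
    MeasurableSet {x | p x ∧ q x} := h.inter h'

lemma meas_not {α : Type*} [MeasurableSpace α] {p : α → Prop}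
    (h : MeasurableSet {x | p x}) : MeasurableSet {x | ¬ p x} := h.compl

lemma meas_imp {α : Type*} [MeasurableSpace α] {p : Prop} {q : α → Prop}
    (h' : MeasurableSet {x | q x}) : MeasurableSet {x | p → q x} := by
  by_cases hp : p
  · simpa [hp] using h'
  · simp [hp]

lemma record_seq (s θ : ℤ → ℝ) (N : ℕ) (h0 : ∀ t, 0 ≤ θ t)
    (h : ∀ t, (∃ m : ℕ, m ≤ N ∧ ∑ j ∈ Finset.range m, s (t - j - 1) < 0) ∨ |s (t - 1)| ≤ θ t) (n : ℕ) :
    ∑ j ∈ Finset.range n, s j ≤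
      ∑ j ∈ Finset.range n, θ (j + 1) + ∑ j ∈ Finset.range N, |s (-(j : ℤ) - 1)| := by
  have hC : 0 ≤ ∑ j ∈ Finset.range N, |s (-(j : ℤ) - 1)| :=
    Finset.sum_nonneg (fun _ _ => abs_nonneg _)
  induction n using Nat.strong_induction_on with
  | _ n ih =>
  rcases Nat.eq_zero_or_pos n with rfl | hn
  · simpa using hC
  rcases h n with ⟨m, hmN, hm⟩ | hθ
  · have hm0 : 0 < m := by
      rcases Nat.eq_zero_or_pos m with rfl | h
      · simp at hm
      · exact h
    rcases le_or_gt m n with hmn | hmn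
    · obtain ⟨k, rfl⟩ := Nat.exists_eq_add_of_le hmn
      have e : ∑ j ∈ Finset.range (k + m), s j =
          ∑ j ∈ Finset.range k, s j + ∑ j ∈ Finset.range m, s (((m + k : ℕ) : ℤ) - j - 1) := by
        rw [Finset.sum_range_add, ← Finset.sum_range_reflect (fun j : ℕ => s (((k + j : ℕ)) : ℤ)) m]
        congr 1
        apply Finset.sum_congr rfl
        intro j hj
        rw [Finset.mem_range] at hj
        congr 1
        omega
      have i := ih k (by omega)
      have mono : ∑ j ∈ Finset.range k, θ (j + 1) ≤ ∑ j ∈ Finset.range (k + m), θ (j + 1) :=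
        Finset.sum_le_sum_of_subset_of_nonneg (Finset.range_mono (by omega)) (fun _ _ _ => h0 _)
      rw [add_comm m k] at hm e ⊢
      rw [e]
      linarith
    · obtain ⟨k, rfl⟩ := Nat.exists_eq_add_of_lt hmn
      have e : ∑ j ∈ Finset.range (n + (k + 1)), s ((n : ℤ) - j - 1) =
          ∑ j ∈ Finset.range n, s j + ∑ j ∈ Finset.range (k + 1), s (-(j : ℤ) - 1) := by
        rw [Finset.sum_range_add, ← Finset.sum_range_reflect (fun j : ℕ => s (j : ℤ)) n]
        congr 1
        · apply Finset.sum_congr rfl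
          intro j hj
          rw [Finset.mem_range] at hj
          congr 1
          omega
        · apply Finset.sum_congr rfl
          intro j hj
          congr 1
          push_cast
          ring
      rw [add_assoc, e] at hm
      have b1 : -∑ j ∈ Finset.range (k + 1), s (-(j : ℤ) - 1) ≤
          ∑ j ∈ Finset.range (k + 1), |s (-(j : ℤ) - 1)| := by
        rw [← Finset.sum_neg_distrib]
        exact Finset.sum_le_sum (fun _ _ => neg_le_abs _)
      have b2 : ∑ j ∈ Finset.range (k + 1), |s (-(j : ℤ) - 1)| ≤
          ∑ j ∈ Finset.range N, |s (-(j : ℤ) - 1)| :=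
        Finset.sum_le_sum_of_subset_of_nonneg (Finset.range_mono (by omega))
          (fun _ _ _ => abs_nonneg _)
      have b3 : 0 ≤ ∑ j ∈ Finset.range n, θ (j + 1) := Finset.sum_nonneg (fun _ _ => h0 _)
      linarith
  · obtain ⟨k, rfl⟩ := Nat.exists_eq_add_of_lt hn
    rw [zero_add] at *
    have i := ih k (by omega)
    rw [Finset.sum_range_succ, Finset.sum_range_succ (fun j : ℕ => θ (j + 1))]
    have e1 : ((k + 1 : ℕ) : ℤ) - 1 = k := by push_cast; ring
    have e2 : ((k + 1 : ℕ) : ℤ) = k + 1 := by push_cast; ring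
    rw [e1, e2] at hθ
    have := le_abs_self (s k)
    linarith

lemma integral_shift {ν : Measure (ℤ → ℝ)} (hν : ν.map fhat = ν) {g : (ℤ → ℝ) → ℝ}
    (hg : Integrable g ν) (k : ℤ) : ∫ x, g (fhatI k x) ∂ν = ∫ x, g x ∂ν := by
  have hmp := mp_fhatI hν k
  have := integral_map (μ := ν) (φ := fhatI k) hmp.measurable.aemeasurable (f := g)
    (by rw [hmp.map_eq]; exact hg.aestronglyMeasurable)
  rw [hmp.map_eq] at this
  exact this.symm

lemma integrable_shift {ν : Measure (ℤ → ℝ)} (hν : ν.map fhat = ν) {g : (ℤ → ℝ) → ℝ}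
    (hg : Integrable g ν) (k : ℤ) : Integrable (fun x => g (fhatI k x)) ν :=
  ((mp_fhatI hν k).integrable_comp hg.aestronglyMeasurable).2 hg

/-- Record times exist almost surely when the forward averages are positive. -/
lemma ae_record {ν : Measure (ℤ → ℝ)} [IsProbabilityMeasure ν] (hν : ν.map fhat = ν)
    {ψ : (ℤ → ℝ) → ℝ} (hm : Measurable ψ) (hi : Integrable ψ ν) {c : ℝ} (hc : 0 < c)
    (hl : ∀ᵐ x ∂ν, ∀ᶠ n : ℕ in atTop, c * n ≤ ∑ j ∈ Finset.range n, ψ (fhatI j x)) :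
    ∀ᵐ x ∂ν, ∃ t : ℤ, ∀ m : ℕ, 0 ≤ ∑ j ∈ Finset.range m, ψ (fhatI (t - j - 1) x) := by
  have hms : ∀ k, Measurable (fun x => ψ (fhatI k x)) := fun k => hm.comp (measurable_fhatI k)
  set E : Set (ℤ → ℝ) := {x | ∃ t : ℤ, ∀ m : ℕ, 0 ≤ ∑ j ∈ Finset.range m, ψ (fhatI (t - j - 1) x)}ᶜ
    with hE
  have hEm : MeasurableSet E := by
    apply MeasurableSet.compl
    exact meas_ex fun t => meas_all fun m => measurableSet_le measurable_const
      (Finset.measurable_sum _ fun j _ => hms _)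
  set H : ℕ → Set (ℤ → ℝ) := fun N => {x | ∃ m : ℕ, m ≤ N ∧
    ∑ j ∈ Finset.range m, ψ (fhatI (-(j : ℤ) - 1) x) < 0} with hH
  have hHm : ∀ N, MeasurableSet (H N) := by
    intro N
    exact meas_ex fun m => meas_and (MeasurableSet.const _) (measurableSet_lt
      (Finset.measurable_sum _ fun j _ => hms _) measurable_const)
  set Θ : ℕ → (ℤ → ℝ) → ℝ := fun N => (E \ H N).indicator (fun x => |ψ (fhatI (-1) x)|) with hΘ
  have hΘi : ∀ N, Integrable (Θ N) ν := fun N =>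
    (integrable_shift hν hi (-1)).abs.indicator (hEm.diff (hHm N))
  have hΘ0 : ∀ N x, 0 ≤ Θ N x := fun N x => Set.indicator_nonneg (fun _ _ => abs_nonneg _) x
  have hEinv : ∀ k x, x ∈ E → fhatI k x ∈ E := by
    intro k x hx
    simp only [hE, mem_compl_iff, mem_ofPred_eq, not_exists] at hx ⊢
    intro t ht
    apply hx (t + k)
    intro m
    have := ht m
    simp only [fhatI_fhatI] at this
    convert this using 5
    ring
  have hEH : ∀ x ∈ E, ∃ N, x ∈ H N := by
    intro x hx
    simp only [hE, mem_compl_iff, mem_ofPred_eq, not_exists, not_forall, not_le] at hx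
    obtain ⟨m, hm⟩ := hx 0
    refine ⟨m, m, le_rfl, ?_⟩
    simpa using hm
  have lim : Tendsto (fun N => ∫ x, Θ N x ∂ν) atTop (𝓝 0) := by
    have := tendsto_integral_of_dominated_convergence (μ := ν) (F := Θ) (f := fun _ => (0:ℝ))
      (fun x => |ψ (fhatI (-1) x)|) (fun N => (hΘi N).aestronglyMeasurable)
      (integrable_shift hν hi (-1)).abs
      (fun N => Eventually.of_forall fun x => by
        rw [Real.norm_eq_abs, abs_of_nonneg (hΘ0 N x)]
        exact Set.indicator_le_self' (fun _ _ => abs_nonneg _) x)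
      (Eventually.of_forall fun x => by
        apply tendsto_const_nhds.congr'
        by_cases hx : x ∈ E
        · obtain ⟨N, hN⟩ := hEH x hx
          filter_upwards [eventually_ge_atTop N] with M hM
          have : x ∉ E \ H M := by
            rintro ⟨_, h⟩
            obtain ⟨m, h1, h2⟩ := hN
            exact h ⟨m, h1.trans hM, h2⟩
          simp only [hΘ]
          rw [Set.indicator_of_notMem this]
        · exact Eventually.of_forall fun M => by
            simp only [hΘ]
            rw [Set.indicator_of_notMem (fun h => hx h.1)])
    simpa using this
  set Ek : ℕ → Set (ℤ → ℝ) := fun k =>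
    {x | x ∈ E ∧ ∀ n : ℕ, k ≤ n → c * n ≤ ∑ j ∈ Finset.range n, ψ (fhatI j x)} with hEk
  have hEkm : ∀ k, MeasurableSet (Ek k) := by
    intro k
    exact meas_and hEm (meas_all fun n => meas_imp (measurableSet_le measurable_const
      (Finset.measurable_sum _ fun j _ => hms _)))
  have bound : ∀ k N n : ℕ, k ≤ n → c * n * ν.real (Ek k) ≤
      n * ∫ x, Θ N x ∂ν + N * ∫ x, |ψ x| ∂ν := by
    intro k N n hkn
    have i1 : Integrable (fun x => ∑ j ∈ Finset.range n, Θ N (fhatI (j + 1) x)) ν :=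
      integrable_finsetSum _ (fun j _ => integrable_shift hν (hΘi N) _)
    have i2 : Integrable (fun x => ∑ j ∈ Finset.range N, |ψ (fhatI (-(j : ℤ) - 1) x)|) ν :=
      integrable_finsetSum _ (fun j _ => integrable_shift hν hi.abs _)
    have hle : ∫ x, (Ek k).indicator (fun _ => c * n) x ∂ν ≤
        ∫ x, (∑ j ∈ Finset.range n, Θ N (fhatI (j + 1) x) +
          ∑ j ∈ Finset.range N, |ψ (fhatI (-(j : ℤ) - 1) x)|) ∂ν := by
      apply integral_mono ((integrable_const _).indicator (hEkm k)) (i1.add i2)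
      intro x
      by_cases hx : x ∈ Ek k
      · rw [Set.indicator_of_mem hx]
        refine (hx.2 n hkn).trans ?_
        apply record_seq (fun i => ψ (fhatI i x)) (fun i => Θ N (fhatI i x)) N
          (fun t => hΘ0 _ _)
        intro t
        by_cases hH' : fhatI t x ∈ H N
        · left
          obtain ⟨m, hmN, h⟩ := hH'
          refine ⟨m, hmN, ?_⟩
          simp only [fhatI_fhatI] at h
          convert h using 5
          ring
        · right
          have : fhatI t x ∈ E \ H N := ⟨hEinv t x hx.1, hH'⟩
          simp only [hΘ]
          rw [Set.indicator_of_mem this, fhatI_fhatI]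
          apply le_of_eq
          congr 3
          ring
      · rw [Set.indicator_of_notMem hx]
        exact add_nonneg (Finset.sum_nonneg fun _ _ => hΘ0 _ _)
          (Finset.sum_nonneg fun _ _ => abs_nonneg _)
    rw [integral_indicator_const _ (hEkm k), integral_add i1 i2,
      integral_finsetSum _ (fun j _ => integrable_shift hν (hΘi N) _),
      integral_finsetSum _ (fun j _ => integrable_shift hν hi.abs _)] at hle
    rw [Finset.sum_congr rfl (fun j _ => integral_shift hν (hΘi N) _),
      Finset.sum_congr rfl (fun j _ => integral_shift hν hi.abs _)] at hle
    simp only [Finset.sum_const, Finset.card_range, nsmul_eq_mul, smul_eq_mul] at hle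
    linarith
  have bound2 : ∀ k N : ℕ, c * ν.real (Ek k) ≤ ∫ x, Θ N x ∂ν := by
    intro k N
    by_contra! hlt
    set δ := c * ν.real (Ek k) - ∫ x, Θ N x ∂ν with hδ
    have hδ0 : 0 < δ := by linarith
    obtain ⟨n, hn⟩ := exists_nat_gt ((N * ∫ x, |ψ x| ∂ν) / δ)
    rw [div_lt_iff₀ hδ0] at hn
    have b := bound k N (max k n) (le_max_left _ _)
    have : (n : ℝ) ≤ ((max k n : ℕ) : ℝ) := by exact_mod_cast le_max_right _ _
    have : (n : ℝ) * δ ≤ ((max k n : ℕ) : ℝ) * δ := mul_le_mul_of_nonneg_right this hδ0.le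
    rw [hδ] at *
    nlinarith
  have zero : ∀ k, ν (Ek k) = 0 := by
    intro k
    have h1 : c * ν.real (Ek k) ≤ 0 := ge_of_tendsto' lim (fun N => bound2 k N)
    have h2 : ν.real (Ek k) = 0 := by
      have h3 : 0 ≤ ν.real (Ek k) := measureReal_nonneg
      nlinarith
    exact (measureReal_eq_zero_iff).1 h2
  have zero' : ∀ᵐ x ∂ν, ∀ k, x ∉ Ek k := ae_all_iff.2 (fun k => measure_eq_zero_iff_ae_notMem.1 (zero k))
  filter_upwards [hl, zero'] with x h1 h2
  by_contra hx
  obtain ⟨k, hk⟩ := eventually_atTop.1 h1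
  exact h2 k ⟨hx, hk⟩

lemma meas_cyl {p : (ℤ → ℚ) → Prop} (J : Finset ℤ)
    (h : ∀ a b : ℤ → ℚ, (∀ i ∈ J, a i = b i) → p a → p b) : MeasurableSet {a | p a} := by
  set r : (ℤ → ℚ) → (J → ℚ) := fun a i => a i with hrdef
  have hr : Measurable r := measurable_pi_lambda _ (fun i => measurable_pi_apply _)
  have : {a | p a} = r ⁻¹' (r '' {a | p a}) := by
    apply Set.Subset.antisymm (Set.subset_preimage_image _ _)
    rintro b ⟨a, ha, hab⟩
    refine h a b (fun i hi => ?_) ha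
    exact congrFun hab ⟨i, hi⟩
  rw [this]
  exact hr (Set.to_countable _).measurableSet

namespace Sys

lemma meas_Good (Y : Sys) (t : ℤ) (κ : ℕ) : MeasurableSet {a | Y.Good a t κ} := by
  refine meas_all fun m => meas_cyl (Finset.Ico (t - m) (t + κ)) fun a b hab => ?_
  apply PP_congr
  intro j h1 h2
  exact hab _ (by rw [Finset.mem_Ico]; omega)

lemma meas_At (Y : Sys) (v : Vx) : MeasurableSet {a | Y.At v a} := by
  have : {a | Y.At v a} = {a | Y.Good a (-(v.p : ℤ)) (v.κ + 1) ∧ v.p < v.n ∧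
      (∀ j : ℤ, (-(v.p : ℤ) < j → j < (v.n : ℤ) - v.p → ¬ Y.Good a j (v.κ + 1))) ∧
      Y.Good a ((v.n : ℤ) - v.p) (v.κ + 1) ∧
      v.l = (List.range (v.n + (v.κ + 1))).map (fun j : ℕ => a (-(v.p : ℤ) + j))} := by
    ext a
    constructor
    · rintro ⟨h1, h2, h3, h4, h5⟩
      exact ⟨h1, h2, h3, h4, h5⟩
    · rintro ⟨h1, h2, h3, h4, h5⟩
      exact ⟨h1, h2, h3, h4, h5⟩
  rw [this]
  refine meas_and (Y.meas_Good _ _) (meas_and (MeasurableSet.const _) (meas_and (meas_all fun j =>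
    meas_imp (meas_imp (meas_not (Y.meas_Good _ _)))) (meas_and (Y.meas_Good _ _) ?_)))
  refine meas_cyl (Finset.Ico (-(v.p : ℤ)) (-(v.p : ℤ) + (v.n + (v.κ + 1) : ℕ))) fun a b hab h => ?_
  rw [h]
  apply List.map_congr_left
  intro j hj
  rw [List.mem_range] at hj
  exact hab _ (by rw [Finset.mem_Ico]; omega)

end Sys

namespace GoodMap

variable {F : GoodMap}

/-- The itinerary of a bi-infinite orbit. -/
def itin (F : GoodMap) (x : ℤ → ℝ) : ℤ → ℚ := fun n => F.lab (x n)

lemma measurable_itin : Measurable F.itin :=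
  measurable_pi_lambda _ (fun n => measurable_lab.comp (measurable_pi_apply n))

lemma itin_shift (k : ℤ) (x : ℤ → ℝ) : F.itin (fhatI k x) = sh k (F.itin x) := rfl

end GoodMap

/-! ### Almost everywhere analysis -/

/-- The properties of a lifted measure which we use. -/
structure Lift (F : GoodMap) (χ : ℝ) (ν : Measure (ℤ → ℝ)) : Prop where
  inv : ν.map fhat = ν
  hat : ∀ᵐ x ∂ν, inMhat F.f x
  ns : ∀ᵐ x ∂ν, ∀ n, x n ∉ F.S
  lyap : ∀ᵐ x ∂ν, ∃ l > χ, Tendsto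
    (fun n : ℕ => Real.log |∏ j ∈ Finset.range n, deriv F.f (x j)| / (n : ℝ)) atTop (𝓝 l)
  int : Integrable (fun x : ℤ → ℝ => Real.log (F.dS (x 0))) ν

lemma inMhat.iter {f : ℝ → ℝ} {x : ℤ → ℝ} (h : inMhat f x) (n : ℤ) (j : ℕ) :
    f^[j] (x n) = x (n + j) := by
  induction j with
  | zero => simp
  | succ j ih =>
    rw [Function.iterate_succ_apply', ih]
    have := h.2 (n + j + 1)
    rw [add_sub_cancel_right] at this
    rw [this]
    congr 1
    push_cast
    ring

lemma inMhat.step {f : ℝ → ℝ} {x : ℤ → ℝ} (h : inMhat f x) (n : ℤ) : f (x n) = x (n + 1) := by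
  simpa using h.iter n 1

lemma inMhat.shift {f : ℝ → ℝ} {x : ℤ → ℝ} (h : inMhat f x) (k : ℤ) : inMhat f (fhatI k x) := by
  refine ⟨fun n => h.1 _, fun n => ?_⟩
  simp only [fhatI]
  rw [h.step]
  congr 1
  ring

lemma Lift.mk' (F : GoodMap) (χ : ℝ) (μ : Measure ℝ) (hμ : IsProbabilityMeasure μ)
    (hf : μ.map F.f = μ) (hS : μ F.S = 0)
    (hlogi : Integrable (fun x => Real.log (F.dS x)) μ)
    (hly : ∀ᵐ x ∂μ, (∀ n : ℕ, F.f^[n] x ∉ F.S) ∧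
            ∃ l > χ, Tendsto
              (fun n : ℕ => Real.log |∏ j ∈ Finset.range n, deriv F.f (F.f^[j] x)| / (n:ℝ))
              atTop (𝓝 l))
    (ν : Measure (ℤ → ℝ)) (hν : IsProbabilityMeasure ν)
    (h1 : ν {x | inMhat F.f x} = 1) (h2 : ν.map fhat = ν) (h3 : ν.map (fun x => x 0) = μ) :
    Lift F χ ν := by
  have hproj : ∀ k : ℤ, ν.map (fun x => x k) = μ := by
    intro k
    have e : (fun x : ℤ → ℝ => x k) = (fun x : ℤ → ℝ => x 0) ∘ fhatI k := by
      funext x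
      simp [fhatI]
    rw [e, ← Measure.map_map (measurable_pi_apply 0) (measurable_fhatI k), (mp_fhatI h2 k).map_eq, h3]
  have hfm : AEMeasurable F.f μ := by
    apply AEMeasurable.of_map_ne_zero
    rw [hf]
    exact hμ.ne_zero
  have tr : ∀ {p : ℝ → Prop}, (∀ᵐ y ∂μ, p y) → ∀ k : ℤ, ∀ᵐ x ∂ν, p (x k) := by
    intro p hp k
    apply ae_of_ae_map (measurable_pi_apply k).aemeasurable
    rw [hproj k]
    exact hp
  have hhat : ∀ᵐ x ∂ν, inMhat F.f x := by
    have hnm : NullMeasurableSet {x | inMhat F.f x} ν := by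
      have e : {x | inMhat F.f x} = (⋂ n : ℤ, {x | x n ∈ Mset}) ∩
          ⋂ n : ℤ, {x | F.f (x (n - 1)) = x n} := by
        ext x
        simp [inMhat]
      rw [e]
      refine NullMeasurableSet.inter (NullMeasurableSet.iInter fun n => ?_)
        (NullMeasurableSet.iInter fun n => ?_)
      · exact ((measurable_pi_apply n) measurableSet_Icc).nullMeasurableSet
      · have hc : AEMeasurable (fun x : ℤ → ℝ => F.f (x (n - 1))) ν := by
          apply AEMeasurable.comp_aemeasurable (g := F.f) _ (measurable_pi_apply _).aemeasurable
          rw [hproj]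
          exact hfm
        exact nullMeasurableSet_eq_fun hc (measurable_pi_apply n).aemeasurable
    exact (mem_ae_iff_prob_eq_one₀ hnm).2 h1
  refine ⟨h2, hhat, ?_, ?_, ?_⟩
  · rw [ae_all_iff]
    exact fun n => tr (measure_eq_zero_iff_ae_notMem.1 hS) n
  · filter_upwards [hhat, tr hly 0] with x hx h
    obtain ⟨_, l, hl, ht⟩ := h
    refine ⟨l, hl, ?_⟩
    simp only [hx.iter, zero_add] at ht
    exact ht
  · have := (integrable_map_measure (μ := ν) (f := fun x : ℤ → ℝ => x 0)
      (g := fun y => Real.log (F.dS y)) (by rw [h3]; exact hlogi.aestronglyMeasurable)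
      (measurable_pi_apply 0).aemeasurable).1 (by rw [h3]; exact hlogi)
    exact this

namespace GoodMap

variable {F : GoodMap}

/-- The logarithmic expansion minus half of the exponent. -/
def psi (F : GoodMap) (χ : ℝ) (x : ℤ → ℝ) : ℝ := Real.log |deriv F.f (x 0)| - χ / 2

lemma measurable_psi (χ : ℝ) : Measurable (F.psi χ) :=
  ((Real.measurable_log.comp ((continuous_abs.measurable).comp ((measurable_deriv F.f).comp
    (measurable_pi_apply 0))))).sub measurable_const

lemma log_deriv_bound (hA : F.SatA) {x : ℝ} (hM : x ∈ Mset) (hx : x ∉ F.S) (hfx : F.f x ∉ F.S) :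
    |(Real.log (|deriv F.f x|))| ≤ F.a * |Real.log (F.dS x)| := by
  have hd := dS_pos hA hM hx hfx
  obtain ⟨⟨hr, _⟩, _, ⟨h2, _⟩, _⟩ := hA x hM hx hfx
  have hr0 : 0 < F.r x := by
    refine lt_of_le_of_lt (le_min ?_ ?_) hr
    · exact Real.rpow_nonneg hd.le _
    · exact Real.rpow_nonneg Metric.infDist_nonneg _
  obtain ⟨l, u⟩ := h2 x (Metric.mem_ball_self (by linarith))
  have hp : 0 < |deriv F.f x| := abs_pos.2 (WW_deriv (mem_WW hA hM hx hfx))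
  have l' := Real.log_le_log (Real.rpow_pos_of_pos hd _) l
  have u' := Real.log_le_log hp u
  rw [Real.log_rpow hd] at l' u'
  have hle : Real.log (F.dS x) ≤ 0 := Real.log_nonpos hd.le (dS_le_one hM)
  rw [abs_of_nonpos hle, abs_le]
  constructor <;> linarith

lemma integrable_psi (hA : F.SatA) {χ : ℝ} {ν : Measure (ℤ → ℝ)} [IsProbabilityMeasure ν]
    (h : Lift F χ ν) : Integrable (F.psi χ) ν := by
  apply Integrable.sub _ (integrable_const _)
  refine (h.int.abs.const_mul F.a).mono'
    ((Real.measurable_log.comp ((continuous_abs.measurable).comp ((measurable_deriv F.f).comp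
    (measurable_pi_apply 0))))).aestronglyMeasurable ?_
  filter_upwards [h.hat, h.ns] with x h1 h2
  exact log_deriv_bound hA (h1.1 0) (h2 0) (by rw [h1.step]; exact h2 _)

lemma ae_record' (hA : F.SatA) {χ : ℝ} (hχ : 0 < χ) {ν : Measure (ℤ → ℝ)} [IsProbabilityMeasure ν]
    (h : Lift F χ ν) : ∀ᵐ x ∂ν, ∃ t : ℤ, ∀ m : ℕ, 0 ≤ ∑ j ∈ Finset.range m,
      (Real.log |deriv F.f (fhatI t x (-(j : ℤ) - 1))| - χ / 2) := by
  have := ae_record h.inv (measurable_psi χ) (integrable_psi hA h) (c := χ / 2) (by linarith) ?_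
  · filter_upwards [this] with x hx
    obtain ⟨t, ht⟩ := hx
    refine ⟨t, fun m => ?_⟩
    refine (ht m).trans (le_of_eq (Finset.sum_congr rfl fun j _ => ?_))
    simp only [psi, fhatI]
    rw [show (0 : ℤ) + (t - j - 1) = -(j : ℤ) - 1 + t by ring]
  · filter_upwards [h.hat, h.ns, h.lyap] with x h1 h2 h3
    obtain ⟨l, hl, ht⟩ := h3
    have hev := ht.eventually (eventually_gt_nhds hl)
    filter_upwards [hev, eventually_gt_atTop 0] with n hn hn0
    have hne : ∀ j : ℤ, deriv F.f (x j) ≠ 0 := fun j =>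
      WW_deriv (mem_WW hA (h1.1 j) (h2 j) (by rw [h1.step]; exact h2 _))
    have hn0' : (0 : ℝ) < n := by exact_mod_cast hn0
    rw [lt_div_iff₀ hn0', Finset.abs_prod, Real.log_prod (fun j _ => abs_ne_zero.2 (hne (j : ℕ)))] at hn
    simp only [psi, fhatI, zero_add]
    rw [Finset.sum_sub_distrib]
    simp only [Finset.sum_const, Finset.card_range, nsmul_eq_mul]
    linarith

lemma ae_temp {χ : ℝ} (hA : F.SatA) (hχ : 0 < χ) {ν : Measure (ℤ → ℝ)} [IsProbabilityMeasure ν]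
    (h : Lift F χ ν) : ∀ᵐ x ∂ν, ∃ c > 0, ∀ j : ℕ,
      c * Real.exp (-(F.β * χ / (4 * F.a) * j)) ≤ F.dS (x (-(j : ℤ))) := by
  have ha := F.ha
  have hb := F.hβ0
  have hε : 0 < F.β * χ / (4 * F.a) := by positivity
  filter_upwards [h.hat, h.ns, ae_tempered h.inv h.int hε] with x h1 h2 h3
  set ε := F.β * χ / (4 * F.a) with hεd
  have hd : ∀ j : ℤ, 0 < F.dS (x j) := fun j =>
    dS_pos hA (h1.1 j) (h2 j) (by rw [h1.step]; exact h2 _)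
  obtain ⟨J, hJ⟩ := eventually_atTop.1 h3
  have hb2 : ∀ j : ℕ, J ≤ j → Real.exp (-(ε * j)) ≤ F.dS (x (-(j : ℤ))) := by
    intro j hj
    have := hJ j hj
    simp only [fhatI, zero_add] at this
    have := (abs_le.1 this).1
    rw [← Real.exp_log (hd (-(j : ℤ)))]
    exact Real.exp_le_exp.2 this
  obtain ⟨c, hc0, hc1, hc⟩ : ∃ c > 0, c ≤ 1 ∧ ∀ j : ℕ, j < J → c ≤ F.dS (x (-(j : ℤ))) := by
    clear hJ hb2
    induction J with
    | zero => exact ⟨1, one_pos, le_rfl, fun j hj => absurd hj (by omega)⟩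
    | succ J ih =>
      obtain ⟨c, h1, h2, h3⟩ := ih
      refine ⟨min c (F.dS (x (-(J : ℤ)))), lt_min h1 (hd _), (min_le_left _ _).trans h2, ?_⟩
      intro j hj
      rcases Nat.lt_succ_iff_lt_or_eq.1 hj with h | rfl
      · exact (min_le_left _ _).trans (h3 j h)
      · exact min_le_right _ _
  refine ⟨c, hc0, fun j => ?_⟩
  rcases lt_or_ge j J with hj | hj
  · refine le_trans ?_ (hc j hj)
    apply mul_le_of_le_one_right hc0.le
    rw [Real.exp_le_one_iff]
    have : (0 : ℝ) ≤ ε * j := by positivity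
    linarith
  · exact le_trans (mul_le_of_le_one_left (Real.exp_pos _).le hc1) (hb2 j hj)

end GoodMap

namespace GoodMap

variable {F : GoodMap}

/-- Repelling periodic points. -/
def PPt (F : GoodMap) : Set ℝ :=
  {x | x ∈ Mset ∧ ∃ p : ℕ, 0 < p ∧ F.f^[p] x = x ∧ ∃ D : ℝ, HasDerivAt F.f^[p] D x ∧ 1 < |D|}

lemma countable_PPt : F.PPt.Countable := by
  have hQ : ∀ p : ℕ, {x : ℝ | F.f^[p] x = x ∧ ∃ D : ℝ, HasDerivAt F.f^[p] D x ∧ 1 < |D|}.Countable := by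
    intro p
    set s := {x : ℝ | F.f^[p] x = x ∧ ∃ D : ℝ, HasDerivAt F.f^[p] D x ∧ 1 < |D|} with hs
    have : s = {x ∈ s | 𝓝[s ∩ Ioi x] x = ⊥} := by
      apply Set.Subset.antisymm _ (fun x hx => hx.1)
      intro x hx
      refine ⟨hx, ?_⟩
      obtain ⟨_, D, hD, hD1⟩ := hx
      have hD' : D - 1 ≠ 0 := by
        intro h
        have : D = 1 := by linarith
        rw [this] at hD1
        simp at hD1
      have hev := (hD.sub (hasDerivAt_id x)).eventually_ne (c := 0) hD'
      rw [← Filter.empty_mem_iff_bot, mem_nhdsWithin_iff_eventually]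
      rw [eventually_nhdsWithin_iff] at hev
      filter_upwards [hev] with y hy hys
      exfalso
      refine hy (ne_of_gt hys.2) ?_
      have := hys.1.1
      simp [this]
    rw [this]
    exact countable_setOfPred_isolated_right_within
  refine (Set.countable_iUnion hQ).mono ?_
  rintro x ⟨_, p, _, h1, h2⟩
  exact Set.mem_iUnion.2 ⟨p, h1, h2⟩

end GoodMap

/-- Eventually periodic orbits. -/
def Per (x : ℤ → ℝ) : Prop := ∃ p : ℕ, 0 < p ∧ ∃ k : ℤ, x (k + p) = x k

lemma Per_shift {x : ℤ → ℝ} {k : ℤ} : Per (fhatI k x) ↔ Per x := by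
  constructor
  · rintro ⟨p, hp, l, h⟩
    refine ⟨p, hp, l + k, ?_⟩
    simp only [fhatI] at h
    rw [← h]
    congr 1
    ring
  · rintro ⟨p, hp, l, h⟩
    refine ⟨p, hp, l - k, ?_⟩
    simp only [fhatI]
    rw [sub_add_cancel, ← h]
    congr 1
    ring

namespace Lift

variable {F : GoodMap} {χ : ℝ} {ν : Measure (ℤ → ℝ)} [IsProbabilityMeasure ν]

lemma ae_per (h : Lift F χ ν) : ∀ᵐ x ∂ν, ∀ p : ℕ, (∃ k : ℤ, x (k + p) = x k) →
    ∀ m : ℤ, x (m + p) = x m := by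
  rw [ae_all_iff]
  intro p
  have hA : MeasurableSet {x : ℤ → ℝ | x p = x 0} :=
    measurableSet_eq_fun (measurable_pi_apply _) (measurable_pi_apply _)
  filter_upwards [h.hat, ae_rec_all h.inv hA.nullMeasurableSet] with x hx hr
  rintro ⟨k, hk⟩ m
  have hk' : fhatI k x ∈ {x : ℤ → ℝ | x p = x 0} := by
    simp only [fhatI, mem_ofPred_eq, zero_add]
    rw [← hk]
    congr 1
    ring
  obtain ⟨n, hn, hn'⟩ := (hr k hk').2 m
  simp only [fhatI, mem_ofPred_eq, zero_add] at hn'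
  obtain ⟨j, rfl⟩ := Int.le.dest hn
  have e1 := hx.iter (p + n) j
  have e2 := hx.iter n j
  rw [hn', e2] at e1
  rw [e1]
  congr 1
  ring

lemma ae_point (h : Lift F χ ν) (c : ℝ) : ∀ᵐ x ∂ν, ∀ k : ℤ, x k = c → Per x := by
  have hA : MeasurableSet {x : ℤ → ℝ | x 0 = c} :=
    measurableSet_eq_fun (measurable_pi_apply _) measurable_const
  filter_upwards [ae_rec_all h.inv hA.nullMeasurableSet] with x hr k hk
  obtain ⟨n, hn, hn'⟩ := (hr k (by simpa [fhatI] using hk)).1 (k + 1)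
  simp only [fhatI, mem_ofPred_eq, zero_add] at hn'
  refine ⟨(n - k).toNat, by omega, k, ?_⟩
  rw [hk, ← hn']
  congr 1
  omega

lemma ae_bd (h : Lift F χ ν) : ∀ᵐ x ∂ν, ¬ Per x → ∃ δ > 0, ∀ N : ℕ, ∃ m : ℕ, N ≤ m ∧
    δ ≤ x (-(m : ℤ)) ∧ x (-(m : ℤ)) ≤ 1 / 2 - δ := by
  have hA : ∀ i : ℕ, MeasurableSet {x : ℤ → ℝ | 1 / ((i : ℝ) + 1) ≤ x 0 ∧ x 0 ≤ 1 / 2 - 1 / ((i : ℝ) + 1)} :=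
    fun i => meas_and (measurableSet_le measurable_const (measurable_pi_apply _))
      (measurableSet_le (measurable_pi_apply _) measurable_const)
  have hr := ae_all_iff.2 fun i => ae_rec h.inv (hA i).nullMeasurableSet
  filter_upwards [h.hat, h.ae_point 0, h.ae_point (1 / 2), hr] with x hx h0 h1 hr hP
  have b := hx.1 0
  simp only [Mset, mem_Icc] at b
  have b0 : 0 < x 0 := lt_of_le_of_ne b.1 (fun e => hP (h0 0 e.symm))
  have b1 : x 0 < 1 / 2 := lt_of_le_of_ne b.2 (fun e => hP (h1 0 e))
  obtain ⟨i, hi⟩ := exists_nat_one_div_lt (lt_min b0 (sub_pos.2 b1))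
  have hi' := lt_min_iff.1 hi
  refine ⟨1 / ((i : ℝ) + 1), by positivity, fun N => ?_⟩
  obtain ⟨n, hn, hn'⟩ := (hr i ⟨hi'.1.le, by linarith [hi'.2]⟩).2 (-N)
  simp only [fhatI, mem_ofPred_eq, zero_add] at hn'
  obtain ⟨m, hm⟩ := Int.eq_ofNat_of_zero_le (show 0 ≤ -n by omega)
  have e : n = -(m : ℤ) := by omega
  rw [e] at hn'
  exact ⟨m, by omega, hn'⟩

lemma ae_mem_of_per (h : Lift F χ ν) (hA : F.SatA) (hχ : 0 < χ) : ∀ᵐ x ∂ν, Per x →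
    x ∈ (F.sys χ hχ).prj F.PPt ''
      {v | (∀ n, (F.sys χ hχ).EE F.PPt (v n) (v (n + 1))) ∧ Recurrent v} := by
  filter_upwards [h.hat, h.ns, h.ae_per, ae_shift h.inv h.lyap] with x hx hns hper hl
  rintro ⟨p, hp, hk⟩
  have hp' := hper p hk
  have hW : ∀ n, x n ∈ F.WW := fun j =>
    GoodMap.mem_WW hA (hx.1 j) (hns j) (by rw [hx.step]; exact hns _)
  refine Sys.mem_image_of_P (fun n => ⟨?_, hx.step n⟩) p hp hp'
  have hD : ∀ j : ℕ, HasDerivAt F.f^[j] (∏ i ∈ Finset.range j, deriv F.f (x (n + i))) (x n) := by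
    intro j
    induction j with
    | zero => simpa using hasDerivAt_id (x n)
    | succ j ih =>
      rw [Function.iterate_succ', Finset.prod_range_succ, mul_comm]
      apply HasDerivAt.comp _ _ ih
      rw [hx.iter]
      exact (GoodMap.WW_diff (hW _)).hasDerivAt
  refine ⟨hx.1 n, p, hp, by rw [hx.iter, hp'], _, hD p, ?_⟩
  set D := ∏ i ∈ Finset.range p, deriv F.f (x (n + i)) with hDd
  have hmul : ∀ (k : ℕ) (m : ℤ), x (m + (p * k : ℕ)) = x m := by
    intro k
    induction k with
    | zero => simp
    | succ k ih =>
      intro m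
      rw [← ih m, ← hp' (m + (p * k : ℕ))]
      congr 1
      push_cast
      ring
  have hpow : ∀ k : ℕ, ∏ i ∈ Finset.range (p * k), deriv F.f (x (n + i)) = D ^ k := by
    intro k
    induction k with
    | zero => simp
    | succ k ih =>
      rw [mul_add, mul_one, Finset.prod_range_add, ih, pow_succ]
      congr 1
      apply Finset.prod_congr rfl
      intro j _
      rw [← hmul k (n + j)]
      congr 2
      push_cast
      ring
  obtain ⟨l, hlχ, ht⟩ := hl n
  obtain ⟨N, hN⟩ := eventually_atTop.1 (ht.eventually (eventually_gt_nhds (hχ.trans hlχ)))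
  have hN' := hN (p * (N + 1)) (by nlinarith)
  have e : ∏ j ∈ Finset.range (p * (N + 1)), deriv F.f (fhatI n x j) = D ^ (N + 1) := by
    rw [← hpow]
    apply Finset.prod_congr rfl
    intro j _
    simp only [fhatI]
    rw [add_comm]
  rw [e] at hN'
  have hpos : (0 : ℝ) < ((p * (N + 1) : ℕ) : ℝ) := by
    have : 0 < p * (N + 1) := by positivity
    exact_mod_cast this
  rw [lt_div_iff₀ hpos, zero_mul, abs_pow, Real.log_pow] at hN'
  have hlog : 0 < Real.log |D| := by
    by_contra! hle
    have : ((N + 1 : ℕ) : ℝ) * Real.log |D| ≤ 0 := mul_nonpos_of_nonneg_of_nonpos (by positivity) hle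
    linarith
  exact (Real.log_pos_iff (abs_nonneg _)).1 hlog

end Lift

namespace GoodMap

variable {F : GoodMap}

/-- Points with the same full itinerary as `q`. -/
def CC (F : GoodMap) (q : ℝ) : Set ℝ := {z | ∀ k, F.Same k q z}

lemma CC_between {q y z w : ℝ} (hy : y ∈ F.CC q) (hz : z ∈ F.CC q) (hw : w ∈ Icc y z) : w ∈ F.CC q := by
  intro k
  have h1 : F.Same k y z := (hy k).symm.trans (hz k)
  exact (hy k).trans ((h1.between (hw.1.trans hw.2)).2 w hw)

lemma measurableSet_CC (q : ℝ) : MeasurableSet (F.CC q) := by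
  have : (F.CC q).OrdConnected := ⟨fun y hy z hz w hw => CC_between hy hz hw⟩
  exact this.measurableSet

lemma Same.iter {k p : ℕ} {y z : ℝ} (h : F.Same (k + p) y z) : F.Same k (F.f^[p] y) (F.f^[p] z) := by
  intro j hj
  rw [← Function.iterate_add_apply, ← Function.iterate_add_apply]
  exact h (j + p) (by omega)

lemma CC_iter {q z z' : ℝ} {p : ℕ} (hz : z ∈ F.CC q) (hfz : F.f^[p] z ∈ F.CC q) (hz' : z' ∈ F.CC q) :
    F.f^[p] z' ∈ F.CC q := by
  intro k
  have h1 : F.Same (k + p) z z' := (hz _).symm.trans (hz' _)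
  exact (hfz k).trans h1.iter

lemma CC_mono {q z : ℝ} {p : ℕ} (hz : z ∈ F.CC q) (hfz : F.f^[p] z ∈ F.CC q) {y w : ℝ}
    (hy : y ∈ F.CC q) (hw : w ∈ F.CC q) (hyw : y < w) : F.f^[2 * p] y < F.f^[2 * p] w := by
  have hy' := CC_iter hz hfz hy
  have hw' := CC_iter hz hfz hw
  set u := min y (min (F.f^[p] y) (F.f^[p] w)) with hu
  set v := max w (max (F.f^[p] y) (F.f^[p] w)) with hv
  have huC : u ∈ F.CC q := by
    rw [hu]
    rcases min_choice y (min (F.f^[p] y) (F.f^[p] w)) with h | h <;> rw [h]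
    · exact hy
    · rcases min_choice (F.f^[p] y) (F.f^[p] w) with h | h <;> rw [h] <;> assumption
  have hvC : v ∈ F.CC q := by
    rw [hv]
    rcases max_choice w (max (F.f^[p] y) (F.f^[p] w)) with h | h <;> rw [h]
    · exact hw
    · rcases max_choice (F.f^[p] y) (F.f^[p] w) with h | h <;> rw [h] <;> assumption
  have u1 : u ≤ y := min_le_left _ _
  have u2 : u ≤ F.f^[p] y := (min_le_right _ _).trans (min_le_left _ _)
  have u3 : u ≤ F.f^[p] w := (min_le_right _ _).trans (min_le_right _ _)
  have v1 : w ≤ v := le_max_left _ _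
  have v2 : F.f^[p] y ≤ v := (le_max_left _ _).trans (le_max_right _ _)
  have v3 : F.f^[p] w ≤ v := (le_max_right _ _).trans (le_max_right _ _)
  have hs : F.Same p u v := (huC p).symm.trans (hvC p)
  have my : y ∈ Icc u v := ⟨u1, by linarith⟩
  have mw : w ∈ Icc u v := ⟨by linarith, v1⟩
  rw [two_mul, Function.iterate_add_apply, Function.iterate_add_apply]
  rcases (hs.between (by linarith)).1 with h | h
  · exact h ⟨u2, v2⟩ ⟨u3, v3⟩ (h my mw hyw)
  · exact h ⟨u3, v3⟩ ⟨u2, v2⟩ (h my mw hyw)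

end GoodMap

namespace Lift

open GoodMap

variable {F : GoodMap} {χ : ℝ} {ν : Measure (ℤ → ℝ)} [IsProbabilityMeasure ν]

lemma ae_CC (h : Lift F χ ν) : ∀ᵐ x ∂ν, ∀ q : ℚ, x 0 ∈ F.CC q → Per x := by
  rw [ae_all_iff]
  intro q
  have hC : MeasurableSet {x : ℤ → ℝ | x 0 ∈ F.CC q} :=
    (measurable_pi_apply 0) (measurableSet_CC _)
  have hA := ae_rec_pow h.inv hC.nullMeasurableSet 1
  have hB1 : ∀ s : ℚ, MeasurableSet {x : ℤ → ℝ | x 0 ∈ F.CC q ∧ x 0 < s} := fun s =>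
    meas_and hC (measurableSet_lt (measurable_pi_apply 0) measurable_const)
  have hB2 : ∀ s : ℚ, MeasurableSet {x : ℤ → ℝ | x 0 ∈ F.CC q ∧ s < x 0} := fun s =>
    meas_and hC (measurableSet_lt measurable_const (measurable_pi_apply 0))
  have r1 := ae_all_iff.2 fun s : ℚ => ae_all_iff.2 fun p : ℕ =>
    ae_rec_pow h.inv (hB1 s).nullMeasurableSet ((2 * p : ℕ) : ℤ)
  have r2 := ae_all_iff.2 fun s : ℚ => ae_all_iff.2 fun p : ℕ =>
    ae_rec_pow h.inv (hB2 s).nullMeasurableSet ((2 * p : ℕ) : ℤ)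
  filter_upwards [h.hat, hA, r1, r2] with x hx hA r1 r2 hxC
  obtain ⟨p, hp, hpC⟩ := hA hxC 1
  simp only [fhatI, mem_ofPred_eq, zero_add, mul_one] at hpC
  have hfC : F.f^[p] (x 0) ∈ F.CC q := by
    rw [hx.iter, zero_add]
    exact hpC
  have hall : ∀ n : ℕ, x (n * ((2 * p : ℕ) : ℤ)) ∈ F.CC q := by
    intro n
    induction n with
    | zero => simpa using hxC
    | succ n ih =>
      have := CC_iter hxC hfC (CC_iter hxC hfC ih)
      rw [hx.iter, hx.iter] at this
      convert this using 2
      push_cast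
      ring
  have hstep : ∀ n : ℕ, F.f^[2 * p] (x (n * ((2 * p : ℕ) : ℤ))) =
      x ((n + 1 : ℕ) * ((2 * p : ℕ) : ℤ)) := by
    intro n
    rw [hx.iter]
    congr 1
    push_cast
    ring
  refine ⟨2 * p, by omega, 0, ?_⟩
  have e1 : x (0 + ((2 * p : ℕ) : ℤ)) = x ((1 : ℕ) * ((2 * p : ℕ) : ℤ)) := by congr 1; ring
  have e0 : x 0 = x ((0 : ℕ) * ((2 * p : ℕ) : ℤ)) := by congr 1; simp
  rw [e1]
  rcases lt_trichotomy (x ((1 : ℕ) * ((2 * p : ℕ) : ℤ))) (x 0) with hlt | heq | hgt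
  · exfalso
    have hmono : ∀ n : ℕ, x ((n + 1 : ℕ) * ((2 * p : ℕ) : ℤ)) < x (n * ((2 * p : ℕ) : ℤ)) := by
      intro n
      induction n with
      | zero => rw [← e0]; exact hlt
      | succ n ih =>
        have := CC_mono hxC hfC (hall _) (hall _) ih
        rwa [hstep, hstep] at this
    have hanti : StrictAnti (fun n : ℕ => x (n * ((2 * p : ℕ) : ℤ))) := strictAnti_nat_of_succ_lt hmono
    obtain ⟨s, hs1, hs2⟩ := exists_rat_btwn hlt
    obtain ⟨n, hn, hn'⟩ := r2 s p ⟨hxC, hs2⟩ 1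
    have h2 := hn'.2
    simp only [fhatI, zero_add] at h2
    have := hanti.antitone hn
    linarith
  · exact heq
  · exfalso
    have hmono : ∀ n : ℕ, x (n * ((2 * p : ℕ) : ℤ)) < x ((n + 1 : ℕ) * ((2 * p : ℕ) : ℤ)) := by
      intro n
      induction n with
      | zero => rw [← e0]; exact hgt
      | succ n ih =>
        have := CC_mono hxC hfC (hall _) (hall _) ih
        rwa [hstep, hstep] at this
    have hanti : StrictMono (fun n : ℕ => x (n * ((2 * p : ℕ) : ℤ))) := strictMono_nat_of_lt_succ hmono
    obtain ⟨s, hs1, hs2⟩ := exists_rat_btwn hgt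
    obtain ⟨n, hn, hn'⟩ := r1 s p ⟨hxC, hs1⟩ 1
    have h2 := hn'.2
    simp only [fhatI, zero_add] at h2
    have := hanti.monotone hn
    linarith

lemma ae_shr (h : Lift F χ ν) (hA : F.SatA) (hχ : 0 < χ) : ∀ᵐ x ∂ν, ¬ Per x → ∀ r > 0, ∃ k,
    closure ((F.sys χ hχ).Z (fun n => F.lab (x n)) 0 k) ⊆ ball (x 0) r := by
  filter_upwards [h.hat, h.ns, h.ae_CC] with x hx hns hCC hP r hr
  have hW : ∀ n, x n ∈ F.WW := fun j =>
    GoodMap.mem_WW hA (hx.1 j) (hns j) (by rw [hx.step]; exact hns _)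
  have hZ : ∀ k z, z ∈ (F.sys χ hχ).Z (fun n => F.lab (x n)) 0 k → F.Same k (x 0) z := by
    intro k z hz j hj
    have := hz j hj
    rw [hx.iter]
    exact ⟨hW _, this.1, this.2.symm⟩
  by_contra! hcon
  have hout : ∀ k, ∃ z, F.Same k (x 0) z ∧ (z < x 0 - r / 2 ∨ x 0 + r / 2 < z) := by
    intro k
    by_contra! hz
    apply hcon k
    have hsub : (F.sys χ hχ).Z (fun n => F.lab (x n)) 0 k ⊆ closedBall (x 0) (r / 2) := by
      intro z hzZ
      have := hz z (hZ k z hzZ)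
      rw [mem_closedBall, Real.dist_eq, abs_le]
      constructor <;> linarith [this.1, this.2]
    exact (closure_minimal hsub isClosed_closedBall).trans (closedBall_subset_ball (by linarith))
  have hanti : ∀ {k l : ℕ} {y z : ℝ}, k ≤ l → F.Same l y z → F.Same k y z :=
    fun hkl hs j hj => hs j (lt_of_lt_of_le hj hkl)
  have hex : ∃ q : ℚ, x 0 ∈ F.CC q := by
    by_cases hR : ∀ k, ∃ z, F.Same k (x 0) z ∧ x 0 + r / 2 < z
    · obtain ⟨q, hq1, hq2⟩ := exists_rat_btwn (show x 0 < x 0 + r / 2 by linarith)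
      refine ⟨q, fun k => ?_⟩
      obtain ⟨z, hz, hz2⟩ := hR k
      exact ((hz.between (by linarith)).2 q ⟨hq1.le, by linarith⟩).symm
    · push Not at hR
      obtain ⟨k0, hk0⟩ := hR
      obtain ⟨q, hq1, hq2⟩ := exists_rat_btwn (show x 0 - r / 2 < x 0 by linarith)
      refine ⟨q, fun k => ?_⟩
      obtain ⟨z, hz, hz2 | hz2⟩ := hout (max k k0)
      · have hz' := hanti (le_max_left k k0) hz
        have h1 := (hz'.symm.between (by linarith)).2 q ⟨by linarith, hq2.le⟩
        exact h1.symm.trans hz'.symm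
      · exact absurd hz2 (not_lt.2 (hk0 z (hanti (le_max_right _ _) hz)))
  obtain ⟨q, hq⟩ := hex
  exact hP (hCC q hq)

end Lift

namespace Lift

open GoodMap

variable {F : GoodMap} {χ : ℝ} {ν : Measure (ℤ → ℝ)} [IsProbabilityMeasure ν]

lemma ae_good (h : Lift F χ ν) (hA : F.SatA) (hχ : 0 < χ) : ∀ᵐ x ∂ν, ¬ Per x →
    ∃ κ : ℕ, ∃ t : ℤ, (F.sys χ hχ).Good (F.itin x) t κ := by
  filter_upwards [h.hat, h.ns, ae_record' hA hχ h, ae_shift h.inv (ae_temp hA hχ h),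
    ae_shift h.inv h.ae_bd, ae_shift h.inv (h.ae_shr hA hχ)] with x hx hns hrec htemp hbd hshr hP
  obtain ⟨t, ht⟩ := hrec
  have hP' : ¬ Per (fhatI t x) := fun h => hP (Per_shift.1 h)
  obtain ⟨κ, hκ⟩ := good_of_hyp hA hχ (hx.shift t) (fun n => hns _) ht (htemp t) (hbd t hP')
    (hshr t hP')
  exact ⟨κ, 0 + t, Sys.Good_sh.1 hκ⟩

lemma not_good_zero (hχ : 0 < χ) {a : ℤ → ℚ} {t : ℤ} : ¬ (F.sys χ hχ).Good a t 0 := by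
  intro hg
  obtain ⟨y, hy, h1⟩ := (hg 1).1 1 (subset_closure (fun j hj => absurd hj (by omega)))
  have hyW : y ∈ F.WW := (hy 0 (by omega)).1
  have := F.hmaps y hyW.1
  have h1' : F.f y = 1 := h1
  rw [h1'] at this
  simp only [Mset, mem_Icc] at this
  linarith [this.2]

lemma ae_mem (h : Lift F χ ν) (hA : F.SatA) (hχ : 0 < χ) : ∀ᵐ x ∂ν,
    x ∈ (F.sys χ hχ).prj F.PPt ''
      {v | (∀ n, (F.sys χ hχ).EE F.PPt (v n) (v (n + 1))) ∧ Recurrent v} := by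
  classical
  have m1 : ∀ κ : ℕ, MeasurableSet {x : ℤ → ℝ | (F.sys χ hχ).Good (F.itin x) 0 κ} := fun κ =>
    measurable_itin ((F.sys χ hχ).meas_Good 0 κ)
  have m2 : ∀ v : Sys.Vx, MeasurableSet {x : ℤ → ℝ | (F.sys χ hχ).At v (F.itin x)} := fun v =>
    measurable_itin ((F.sys χ hχ).meas_At v)
  have r1 := ae_all_iff.2 fun κ => ae_rec_all h.inv (m1 κ).nullMeasurableSet
  have r2 := ae_all_iff.2 fun v => ae_rec_all h.inv (m2 v).nullMeasurableSet
  filter_upwards [h.hat, h.ns, h.ae_mem_of_per hA hχ, h.ae_good hA hχ, r1, r2] with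
    x hx hns hper hgood r1 r2
  by_cases hP : Per x
  · exact hper hP
  have hW : ∀ n, x n ∈ F.WW := fun j =>
    GoodMap.mem_WW hA (hx.1 j) (hns j) (by rw [hx.step]; exact hns _)
  have hO : (F.sys χ hχ).Orb x := fun n => ⟨hW n, hx.step n⟩
  have hex := hgood hP
  obtain ⟨t, ht⟩ := Nat.find_spec hex
  have hmin : ∀ κ < Nat.find hex, ¬ ∃ t, (F.sys χ hχ).Good (F.itin x) t κ := fun κ hκ =>
    Nat.find_min hex hκ
  generalize Nat.find hex = κs at ht hmin
  cases κs with
  | zero => exact absurd ht (not_good_zero hχ)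
  | succ κ =>
  have gs : ∀ n, fhatI n x ∈ {x : ℤ → ℝ | (F.sys χ hχ).Good (F.itin x) 0 (κ + 1)} ↔
      (F.sys χ hχ).Good (F.itin x) n (κ + 1) := by
    intro n
    have := Sys.Good_sh (Y := F.sys χ hχ) (a := F.itin x) (k := n) (t := 0) (κ := κ + 1)
    rw [zero_add] at this
    exact this
  obtain ⟨g1, g2⟩ := r1 (κ + 1) t ((gs t).2 ht)
  have hX : F.itin x ∈ (F.sys χ hχ).X κ := by
    refine ⟨⟨x, hO, fun n => rfl⟩, fun N => ?_, fun N => ?_, fun t ht => ?_⟩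
    · obtain ⟨n, hn, hg⟩ := g1 N
      exact ⟨n, hn, (gs n).1 hg⟩
    · obtain ⟨n, hn, hg⟩ := g2 N
      exact ⟨n, hn, (gs n).1 hg⟩
    · exact hmin κ (Nat.lt_succ_self κ) ⟨t, ht⟩
  obtain ⟨v, hvκ, hv⟩ := Sys.exists_At hX
  obtain ⟨s1, s2⟩ := r2 v 0 (by rw [fhatI_zero]; exact hv)
  refine Sys.mem_image_of_X hO hX v v hvκ hvκ ?_ ?_
  · apply Set.infinite_of_forall_exists_gt
    intro N
    obtain ⟨n, hn, hg⟩ := s1 (max (N + 1) 1)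
    exact ⟨n, ⟨by omega, hg⟩, by omega⟩
  · apply Set.infinite_of_forall_exists_lt
    intro N
    obtain ⟨n, hn, hg⟩ := s2 (min (N - 1) (-1))
    exact ⟨n, ⟨by omega, hg⟩, by omega⟩

end Lift

/-- Main symbolic-dynamics theorem (Theorem 1.1). -/
theorem main_symbolic_model (F : GoodMap) (hA : F.SatA) (χ : ℝ) (hχ : 0 < χ) :
    ∃ ε₀ > 0, ∀ ε : ℝ, 0 < ε → ε < ε₀ →
      ∃ (V : Type) (E : V → V → Prop) (prj : (ℤ → V) → (ℤ → ℝ)),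
        Countable V ∧
        (∀ v : ℤ → V, (∀ n, E (v n) (v (n + 1))) → inMhat F.f (prj v)) ∧
        -- (0) prj is Hölder continuous
        (∃ C > 0, ∃ α : ℝ, 0 < α ∧ α ≤ 1 ∧
          ∀ v w : ℤ → V, (∀ n, E (v n) (v (n + 1))) → (∀ n, E (w n) (w (n + 1))) →
            dhat (prj v) (prj w) ≤ C * dSigma v w ^ α) ∧
        -- (1) prj ∘ σ = f̂ ∘ prj
        (∀ v : ℤ → V, (∀ n, E (v n) (v (n + 1))) →
          prj (fun n => v (n + 1)) = fhat (prj v)) ∧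
        -- (2) prj[Σ^#] has full outer measure for every lift of every f-adapted
        --     χ-expanding invariant probability measure
        (∀ μ : Measure ℝ, IsProbabilityMeasure μ → μ Mset = 1 → μ.map F.f = μ →
          μ F.S = 0 → Integrable (fun x => Real.log (F.dS x)) μ →
          (∀ᵐ x ∂μ, (∀ n : ℕ, F.f^[n] x ∉ F.S) ∧
            ∃ l > χ, Tendsto
              (fun n : ℕ => Real.log |∏ j ∈ Finset.range n, deriv F.f (F.f^[j] x)| / (n:ℝ))
              atTop (𝓝 l)) →
          ∀ μhat : Measure (ℤ → ℝ), IsProbabilityMeasure μhat →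
            μhat {x | inMhat F.f x} = 1 → μhat.map fhat = μhat →
            μhat.map (fun x => x 0) = μ →
            μhat (prj '' {v : ℤ → V | (∀ n, E (v n) (v (n + 1))) ∧ Recurrent v}) = 1) ∧
        -- (3) finite-to-one on the recurrent set
        (∀ xh ∈ prj '' {v : ℤ → V | (∀ n, E (v n) (v (n + 1))) ∧ Recurrent v},
          {v : ℤ → V | ((∀ n, E (v n) (v (n + 1))) ∧ Recurrent v) ∧ prj v = xh}.Finite) := by
  have hP : F.PPt ⊆ Mset := fun x hx => hx.1
  refine ⟨1, one_pos, fun ε _ _ => ⟨Sys.Vx ⊕ F.PPt, (F.sys χ hχ).EE F.PPt, (F.sys χ hχ).prj F.PPt,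
    ?_, ?_, ?_, ?_, ?_, ?_⟩⟩
  · have : Countable F.PPt := GoodMap.countable_PPt.to_subtype
    infer_instance
  · intro v hv
    exact (Sys.rep_prj hv).inMhat hP
  · exact Sys.holder hP
  · intro v hv
    exact ((Sys.rep_prj hv).shift 1).prj_eq
  · intro μ hμ _ hf hS hlogi hly ν hν h1 h2 h3
    have hL := Lift.mk' F χ μ hμ hf hS hlogi hly ν hν h1 h2 h3
    have hae := hL.ae_mem hA hχ
    refine le_antisymm prob_le_one ?_
    rw [← measure_univ (μ := ν)]
    exact measure_mono_ae (hae.mono fun x hx _ => hx)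
  · intro xh _
    exact Sys.fibre_finite xh

end OneDim
end
end

section
/- Assume f satisfies (A1)–(A3) and fix χ > 0. For every x̂ = (x_n)_{n∈ℤ} ∈ NUE_χ, the composition F_{x̂} := Ψ_{f̂(x̂)}^{−1} ∘ f ∘ Ψ_{x̂} is a diffeomorphism from [−2r(x₀), 2r(x₀)] onto its image, it satisfies F_{x̂}(0) = 0, and |(dF_{x̂})_0| > e^χ; more precisely |(dF_{x̂})_0|² = e^{2χ} u(f̂(x̂))² / (u(f̂(x̂))² − 1). -/
open Real MeasureTheory Filter Topology Metric Set

noncomputable section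

namespace OneDim

theorem dfhat_neg (f : ℝ → ℝ) (x : ℤ → ℝ) (n : ℕ) :
    dfhat f x (-(n:ℤ)) = (∏ j ∈ Finset.range n, deriv f (x (-(j : ℤ) - 1)))⁻¹ := by
  unfold dfhat
  rcases Nat.eq_zero_or_pos n with h | h
  · subst h; simp
  · rw [if_neg (by omega)]
    simp

theorem dfhat_fhat_succ (f : ℝ → ℝ) (x : ℤ → ℝ) (n : ℕ) :
    dfhat f (fhat x) (-((n + 1 : ℕ):ℤ)) = (deriv f (x 0))⁻¹ * dfhat f x (-(n:ℤ)) := by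
  rw [dfhat_neg, dfhat_neg, Finset.prod_range_succ', mul_inv, mul_comm]
  have h0 : fhat x (-((0:ℕ):ℤ) - 1) = x 0 := by simp [fhat]
  rw [h0]
  congr 2
  simp only [fhat]
  apply Finset.prod_congr rfl
  intro j _
  congr 2
  push_cast
  ring

/-- The terms of the series defining `u`. -/
def uTerm (f : ℝ → ℝ) (χ : ℝ) (x : ℤ → ℝ) (n : ℕ) : ℝ :=
  Real.exp (2 * (n:ℝ) * χ) * (dfhat f x (-(n:ℤ))) ^ 2

theorem uTerm_nonneg (f : ℝ → ℝ) (χ : ℝ) (x : ℤ → ℝ) (n : ℕ) : 0 ≤ uTerm f χ x n := by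
  unfold uTerm; positivity

theorem uTerm_zero (f : ℝ → ℝ) (χ : ℝ) (x : ℤ → ℝ) : uTerm f χ x 0 = 1 := by
  simp [uTerm, dfhat]

theorem uTerm_succ (f : ℝ → ℝ) (χ : ℝ) (x : ℤ → ℝ) (n : ℕ) :
    uTerm f χ (fhat x) (n + 1) =
      (Real.exp (2 * χ) * ((deriv f (x 0))⁻¹) ^ 2) * uTerm f χ x n := by
  unfold uTerm
  rw [dfhat_fhat_succ]
  have : Real.exp (2 * ((n + 1 : ℕ):ℝ) * χ) = Real.exp (2 * χ) * Real.exp (2 * (n:ℝ) * χ) := by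
    rw [← Real.exp_add]; congr 1; push_cast; ring
  rw [this]; ring

theorem uPes_sq (f : ℝ → ℝ) (χ : ℝ) (x : ℤ → ℝ) :
    uPes f χ x ^ 2 = ∑' n, uTerm f χ x n := by
  unfold uPes
  rw [Real.sq_sqrt]
  · rfl
  · exact tsum_nonneg (uTerm_nonneg f χ x)

theorem uTerm_summable (f : ℝ → ℝ) (χ : ℝ) (x : ℤ → ℝ) (l : ℝ) (hl : χ < l)
    (hd : ∀ n, deriv f (x n) ≠ 0)
    (ht : Tendsto (fun n : ℕ => Real.log |dfhat f x (-(n:ℤ))| / (-(n:ℝ))) atTop (𝓝 l)) :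
    Summable (uTerm f χ x) := by
  obtain ⟨m, hm1, hm2⟩ := exists_between hl
  have hev : ∀ᶠ n : ℕ in atTop, uTerm f χ x n ≤ (Real.exp (2 * (χ - m))) ^ n := by
    filter_upwards [ht.eventually (lt_mem_nhds hm2), eventually_gt_atTop 0] with n hn hn0
    have hpos : (0:ℝ) < n := by exact_mod_cast hn0
    have hne : 0 < |dfhat f x (-(n:ℤ))| := by
      rw [dfhat_neg]
      exact abs_pos.mpr (inv_ne_zero (Finset.prod_ne_zero_iff.mpr fun j _ => hd _))
    have hlog : Real.log |dfhat f x (-(n:ℤ))| ≤ -(m * n) := by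
      rw [div_neg, lt_neg, div_lt_iff₀ hpos] at hn
      linarith
    have h1 : |dfhat f x (-(n:ℤ))| ≤ Real.exp (-(m * n)) := (Real.log_le_iff_le_exp hne).1 hlog
    have h2 : (dfhat f x (-(n:ℤ))) ^ 2 ≤ Real.exp (-(m * n)) ^ 2 := by
      rw [← sq_abs]; gcongr
    unfold uTerm
    calc _ ≤ Real.exp (2 * (n:ℝ) * χ) * Real.exp (-(m * n)) ^ 2 := by gcongr
      _ = _ := by
        rw [← Real.exp_nat_mul, ← Real.exp_nat_mul, ← Real.exp_add]
        congr 1; push_cast; ring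
  have hlt : Real.exp (2 * (χ - m)) < 1 := by
    rw [← Real.exp_zero]; exact Real.exp_lt_exp.2 (by linarith)
  refine Summable.of_norm_bounded_eventually_nat
    (summable_geometric_of_lt_one (Real.exp_pos _).le
      hlt) ?_
  filter_upwards [hev] with n hn
  rwa [Real.norm_of_nonneg (uTerm_nonneg f χ x n)]

/-- linear reduction (Lemma 2.1): `F_{x̂}` is a diffeomorphism on
`[-2r(x₀), 2r(x₀)]` with `F_{x̂}(0) = 0` and `|(dF_{x̂})₀| > e^χ`. -/
theorem linear_reduction (F : GoodMap) (hA : F.SatA) (χ : ℝ) (hχ : 0 < χ)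
    (x : ℤ → ℝ) (hx : x ∈ NUE F χ) :
    Set.InjOn (Fmap F χ x) (Set.Icc (-(2 * F.r (x 0))) (2 * F.r (x 0))) ∧
    (∀ t ∈ Set.Icc (-(2 * F.r (x 0))) (2 * F.r (x 0)),
      DifferentiableAt ℝ (Fmap F χ x) t ∧ deriv (Fmap F χ x) t ≠ 0) ∧
    Fmap F χ x 0 = 0 ∧
    Real.exp χ < |deriv (Fmap F χ x) 0| ∧
    (deriv (Fmap F χ x) 0) ^ 2 =
      Real.exp (2 * χ) * uPes F.f χ (fhat x) ^ 2 / (uPes F.f χ (fhat x) ^ 2 - 1) := by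
  obtain ⟨⟨hM, horb⟩, hS, -, l, hl, ht⟩ := hx
  have hd : ∀ n, deriv F.f (x n) ≠ 0 := by
    intro n h
    exact hS n (Or.inl ⟨⟨hM n, fun h' => hS n (Or.inr h')⟩, h⟩)
  have hf0 : F.f (x 0) = x 1 := by simpa using horb 1
  have hsum := uTerm_summable F.f χ x l hl hd ht
  -- `u(x) > 1`
  have hu1 : 1 < uPes F.f χ x ^ 2 := by
    rw [uPes_sq]
    have h := hsum.sum_le_tsum (Finset.range 2) (fun n _ => uTerm_nonneg F.f χ x n)
    rw [Finset.sum_range_succ, Finset.sum_range_one, uTerm_zero] at h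
    have h1 : 0 < uTerm F.f χ x 1 := by
      unfold uTerm
      rw [dfhat_neg]
      have : (∏ j ∈ Finset.range 1, deriv F.f (x (-(j : ℤ) - 1)))⁻¹ ≠ 0 :=
        inv_ne_zero (Finset.prod_ne_zero_iff.mpr fun j _ => hd _)
      positivity
    linarith
  have hu0 : 0 ≤ uPes F.f χ x := Real.sqrt_nonneg _
  have hu : 1 < uPes F.f χ x := by nlinarith
  -- recursion
  have hrec : uPes F.f χ (fhat x) ^ 2 =
      1 + Real.exp (2 * χ) * ((deriv F.f (x 0))⁻¹) ^ 2 * uPes F.f χ x ^ 2 := by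
    have hs' : Summable (uTerm F.f χ (fhat x)) := by
      rw [← summable_nat_add_iff 1]
      simp only [uTerm_succ]
      exact hsum.mul_left _
    rw [uPes_sq, uPes_sq, hs'.tsum_eq_zero_add, uTerm_zero]
    simp only [uTerm_succ]
    rw [tsum_mul_left]
  have hv0 : 0 ≤ uPes F.f χ (fhat x) := Real.sqrt_nonneg _
  have hd0 := hd 0
  have hupos : 0 < uPes F.f χ x := by linarith
  have hv1 : 1 < uPes F.f χ (fhat x) ^ 2 := by
    rw [hrec]
    have : 0 < Real.exp (2 * χ) * ((deriv F.f (x 0))⁻¹) ^ 2 * uPes F.f χ x ^ 2 := by positivity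
    linarith
  have hv : 1 < uPes F.f χ (fhat x) := by nlinarith
  have hvpos : 0 < uPes F.f χ (fhat x) := by linarith
  obtain ⟨⟨hr, -⟩, ⟨hinj, hdiff, -⟩, ⟨hA2, -⟩, -⟩ :=
    hA (x 0) (hM 0) (hS 0) (by rw [hf0]; exact hS 1)
  have hrpos : 0 < F.r (x 0) := by
    refine lt_of_le_of_lt (le_min ?_ ?_) hr <;> exact Real.rpow_nonneg Metric.infDist_nonneg _
  have hdS : 0 < F.dS (x 0) := by
    refine lt_of_le_of_ne Metric.infDist_nonneg fun h => ?_
    have h2 := (hA2 (x 0) (Metric.mem_ball_self (by linarith))).2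
    rw [← h, Real.zero_rpow (by have := F.ha; linarith)] at h2
    exact hd0 (abs_eq_zero.1 (le_antisymm h2 (abs_nonneg _)))
  have hmem : ∀ t ∈ Set.Icc (-(2 * F.r (x 0))) (2 * F.r (x 0)),
      Psi F.f χ x t ∈ Metric.ball (x 0) (2 * F.r (x 0)) := by
    intro t ht
    rw [Metric.mem_ball, Real.dist_eq, Psi, add_sub_cancel_right, abs_div, abs_of_pos hupos,
      div_lt_iff₀ hupos]
    have := abs_le.2 ht
    nlinarith
  have hderiv : ∀ t ∈ Set.Icc (-(2 * F.r (x 0))) (2 * F.r (x 0)),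
      HasDerivAt (Fmap F χ x)
        (uPes F.f χ (fhat x) * (deriv F.f (Psi F.f χ x t) * (1 / uPes F.f χ x))) t := by
    intro t ht
    have h1 : HasDerivAt (Psi F.f χ x) (1 / uPes F.f χ x) t :=
      ((hasDerivAt_id t).div_const _).add_const _
    have h2 := (hdiff _ (hmem t ht)).hasDerivAt
    exact ((h2.comp t h1).sub_const _).const_mul _
  have hdne : ∀ t ∈ Set.Icc (-(2 * F.r (x 0))) (2 * F.r (x 0)),
      deriv F.f (Psi F.f χ x t) ≠ 0 := by
    intro t ht
    have h := (hA2 _ (hmem t ht)).1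
    exact abs_pos.1 (lt_of_lt_of_le (Real.rpow_pos_of_pos hdS _) h)
  have h0mem : (0:ℝ) ∈ Set.Icc (-(2 * F.r (x 0))) (2 * F.r (x 0)) :=
    ⟨by linarith, by linarith⟩
  have hPsi0 : Psi F.f χ x 0 = x 0 := by simp [Psi]
  have hD0 : deriv (Fmap F χ x) 0 =
      uPes F.f χ (fhat x) * (deriv F.f (x 0) * (1 / uPes F.f χ x)) := by
    rw [(hderiv 0 h0mem).deriv, hPsi0]
  have hsq : (deriv (Fmap F χ x) 0) ^ 2 =
      Real.exp (2 * χ) * uPes F.f χ (fhat x) ^ 2 / (uPes F.f χ (fhat x) ^ 2 - 1) := by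
    have hsub : uPes F.f χ (fhat x) ^ 2 - 1 =
        Real.exp (2 * χ) * ((deriv F.f (x 0))⁻¹) ^ 2 * uPes F.f χ x ^ 2 := by
      rw [hrec]; ring
    rw [hsub, hD0]
    have := (Real.exp_pos (2 * χ)).ne'
    field_simp
  refine ⟨?_, ?_, ?_, ?_, hsq⟩
  · intro s hs t ht h
    have h1 : F.f (Psi F.f χ x s) = F.f (Psi F.f χ x t) := by
      have := mul_left_cancel₀ hvpos.ne' h
      linarith
    have h2 := hinj (hmem s hs) (hmem t ht) h1
    simp only [Psi] at h2
    have h3 := add_right_cancel h2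
    exact (div_left_inj' hupos.ne').1 h3
  · intro t ht
    refine ⟨(hderiv t ht).differentiableAt, ?_⟩
    rw [(hderiv t ht).deriv]
    have := hdne t ht
    positivity
  · simp [Fmap, hPsi0, hf0]
  · refine lt_of_pow_lt_pow_left₀ 2 (abs_nonneg _) ?_
    rw [sq_abs, hsq, lt_div_iff₀ (by linarith), ← Real.exp_nat_mul]
    have := Real.exp_pos (2 * χ)
    push_cast
    nlinarith


end OneDim
end
end
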